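/- arXiv:2406.15589 — 10 statements merged into one kernel-verified Lean document; each statement's English description precedes it below -/
import Mathlib

section
/- Let n ≥ 2 and let α, α' ∈ F^{n−1} with α ≠ α'. Then the number of points x ∈ F^n with F_α(x) = 0 and F_{α'}(x) = 0 equals q^{2n−2}. In particular, the varieties obtained from the Buekenhout–Metz quasi-Hermitian variety by the translation group are mutually q^{2n−2}-intersecting in affine points. -/
/-- The affine form `F_α` associated to translates of the Buekenhout–Metz
quasi-Hermitian variety.  A point of `F^n` is represented as a pair
`x = (x₁,…,x_{n-1}, x_n) : (Fin (n-1) → F) × F`. -/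
def Falpha {F : Type*} [Field F] (q : ℕ) {m : ℕ} (a b : F) (α : Fin m → F)
    (x : (Fin m → F) × F) : F :=
  x.2 ^ q - x.2 + ∑ i : Fin m,
    (a ^ q * x.1 i ^ (2 * q) - a * x.1 i ^ 2 - (b ^ q - b) * x.1 i ^ (q + 1)
      + (2 * a ^ q * α i ^ q - (b ^ q - b) * α i) * x.1 i ^ q
      - (2 * a * α i + (b ^ q - b) * α i ^ q) * x.1 i)

/-!
Write `σ x = x ^ q`, `φ x = σ x - x` and `N x = x σ(x)`. Since `N x` is fixed by `σ`, the form
factors through `φ`: `F_α(x, t) = φ (t + ∑ i, (a xᵢ² - b N(xᵢ) + A(αᵢ) xᵢ))`, where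
`A(δ) = 2 a δ + φ(b) σ(δ)` is additive in `δ`. Hence `F_α - F_α'` is `φ ∘ L` for the linear form
`L` with coefficients `A(αᵢ - α'ᵢ)`, and after a shear in `t` the common zeros become
`ker (φ ∘ L) × ker φ`. If `L ≠ 0`, then `φ ∘ L` has the same range as `φ`. This range consists of
the `y` with `σ y = -y` (additive Hilbert 90), a one-dimensional space over the fixed field
`ker φ`, so `ker (φ ∘ L) × ker φ` has as many elements as the domain of `L`.
-/

theorem card_prod_subtype_shear {A B : Type*} [AddGroup B] (P : A → Prop) (Q : B → Prop)
    (f : A → B) :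
    Nat.card {x : A × B // P x.1 ∧ Q (x.2 + f x.1)} =
      Nat.card {u // P u} * Nat.card {t // Q t} := by
  let shear : A × B ≃ A × B := Equiv.prodShear (Equiv.refl A) fun u => Equiv.addRight (f u)
  rw [← Nat.card_prod]
  exact Nat.card_congr ((shear.subtypeEquiv fun _ => Iff.rfl).trans Equiv.subtypeProdEquivProd)

theorem card_ker_mul_card_range {G H : Type*} [AddGroup G] [AddGroup H] (f : G →+ H) :
    Nat.card f.ker * Nat.card f.range = Nat.card G := by
  rw [← AddSubgroup.index_ker]
  exact AddSubgroup.card_mul_index f.ker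

section Involution

variable {F : Type*} [Field F] {σ : F →+* F}

/-- The additive map `φ : x ↦ σ x - x`, whose kernel is the fixed field of `σ`. -/
def conjSub (σ : F →+* F) : F →+ F :=
  (σ : F →+ F) - AddMonoidHom.id F

theorem conjSub_apply (σ : F →+* F) (x : F) : conjSub σ x = σ x - x := rfl

theorem mem_ker_conjSub {x : F} : x ∈ (conjSub σ).ker ↔ σ x = x := by
  rw [AddMonoidHom.mem_ker, conjSub_apply, sub_eq_zero]

theorem map_conjSub (hσ : Function.Involutive σ) (x : F) : σ (conjSub σ x) = -conjSub σ x := by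
  rw [conjSub_apply, map_sub, hσ x, neg_sub]

theorem exists_add_map_ne_zero (hσ : σ ≠ RingHom.id F) : ∃ z, z + σ z ≠ 0 := by
  by_contra! htrace
  have two_eq_zero : (1 : F) + 1 = 0 := by simpa only [map_one] using htrace 1
  refine hσ (RingHom.ext fun z => ?_)
  rw [RingHom.id_apply]
  linear_combination htrace z - z * two_eq_zero

theorem mem_range_conjSub_iff (hσ : Function.Involutive σ) (hσ' : σ ≠ RingHom.id F) {y : F} :
    y ∈ (conjSub σ).range ↔ σ y = -y := by
  refine ⟨?_, fun hy => ?_⟩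
  · rintro ⟨x, rfl⟩
    exact map_conjSub hσ x
  · obtain ⟨z, hz⟩ := exists_add_map_ne_zero hσ'
    have hz' : σ z + z ≠ 0 := by rwa [add_comm]
    refine ⟨-(y * z) / (z + σ z), ?_⟩
    rw [conjSub_apply, map_div₀, map_neg, map_mul, map_add, hσ z, hy]
    field_simp
    ring

theorem card_range_conjSub (hσ : Function.Involutive σ) (hσ' : σ ≠ RingHom.id F) :
    Nat.card (conjSub σ).range = Nat.card (conjSub σ).ker := by
  obtain ⟨b, hb⟩ : ∃ b, σ b ≠ b := by
    by_contra! hfix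
    exact hσ' (RingHom.ext hfix)
  have hw : conjSub σ b ≠ 0 := sub_ne_zero.mpr hb
  refine (Nat.card_congr ((Equiv.mulLeft₀ _ hw).subtypeEquiv fun x => ?_)).symm
  rw [mem_ker_conjSub, mem_range_conjSub_iff hσ hσ', Equiv.mulLeft₀_apply, map_mul,
    map_conjSub hσ, neg_mul, neg_inj, mul_right_inj' hw]

theorem card_ker_conjSub_comp_mul_card_ker {A : Type*} [AddGroup A] (hσ : Function.Involutive σ)
    (hσ' : σ ≠ RingHom.id F) {f : A →+ F} (hf : Function.Surjective f) :
    Nat.card ((conjSub σ).comp f).ker * Nat.card (conjSub σ).ker = Nat.card A := by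
  have hrange : ((conjSub σ).comp f).range = (conjSub σ).range := by
    rw [AddMonoidHom.range_comp, AddMonoidHom.range_eq_top.mpr hf, ← AddMonoidHom.range_eq_map]
  rw [← card_range_conjSub hσ hσ', ← hrange, card_ker_mul_card_range]

/-- The coefficient `A(δ) = 2 a δ + φ(b) σ(δ)` with which a translation parameter `δ` enters
`F_α`. -/
def translationCoeff (σ : F →+* F) (a b : F) : F →+ F :=
  AddMonoidHom.mulLeft (2 * a) + (AddMonoidHom.mulLeft (conjSub σ b)).comp (σ : F →+ F)

theorem translationCoeff_apply (σ : F →+* F) (a b δ : F) :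
    translationCoeff σ a b δ = 2 * a * δ + conjSub σ b * σ δ := rfl

theorem map_translationCoeff (hσ : Function.Involutive σ) (a b δ : F) :
    σ (translationCoeff σ a b δ) = 2 * σ a * σ δ - conjSub σ b * δ := by
  rw [translationCoeff_apply, map_add, map_mul, map_mul, map_mul, map_conjSub hσ, hσ δ, map_ofNat]
  ring

theorem translationCoeff_injective (hσ : Function.Involutive σ) {a b : F}
    (hab : 4 * (σ a * a) + conjSub σ b ^ 2 ≠ 0) :
    Function.Injective (translationCoeff σ a b) := by
  refine (injective_iff_map_eq_zero _).mpr fun δ hδ => ?_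
  have hσδ := map_translationCoeff hσ a b δ
  rw [hδ, map_zero] at hσδ
  rw [translationCoeff_apply] at hδ
  refine (mul_eq_zero.mp ?_).resolve_left hab
  linear_combination (2 * σ a) * hδ + conjSub σ b * hσδ

/-- The part `∑ i, (a uᵢ² - b N(uᵢ) + A(αᵢ) uᵢ)` of the argument of `φ` in `F_α(u, t)` that does
not involve the last coordinate `t`. -/
def lastShift {ι : Type*} [Fintype ι] (σ : F →+* F) (a b : F) (α u : ι → F) : F :=
  ∑ i, (a * u i ^ 2 - b * (u i * σ (u i)) + translationCoeff σ a b (α i) * u i)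

theorem lastShift_sub_lastShift {ι : Type*} [Fintype ι] (σ : F →+* F) (a b : F) (α α' u : ι → F) :
    lastShift σ a b α u - lastShift σ a b α' u =
      (fun i => translationCoeff σ a b (α i - α' i)) ⬝ᵥ u := by
  simp only [lastShift, dotProduct, ← Finset.sum_sub_distrib, map_sub, add_sub_add_left_eq_sub,
    sub_mul]

theorem Falpha_eq_conjSub {q : ℕ} (hpow : ∀ x, σ x = x ^ q) (hσ : Function.Involutive σ)
    {m : ℕ} (a b : F) (α : Fin m → F) (x : (Fin m → F) × F) :
    Falpha q a b α x = conjSub σ (x.2 + lastShift σ a b α x.1) := by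
  rw [map_add, lastShift, map_sum, Falpha, conjSub_apply, hpow x.2]
  congr 1
  refine Finset.sum_congr rfl fun i _ => ?_
  have hquadratic : σ (a * x.1 i ^ 2 - b * (x.1 i * σ (x.1 i))) =
      σ a * σ (x.1 i) ^ 2 - σ b * (σ (x.1 i) * x.1 i) := by
    simp only [map_sub, map_mul, map_pow, hσ (x.1 i)]
  rw [conjSub_apply, map_add, hquadratic, map_mul, map_translationCoeff hσ]
  simp only [translationCoeff_apply, conjSub_apply, hpow]
  ring

theorem Falpha_eq_zero_and_iff {q : ℕ} (hpow : ∀ x, σ x = x ^ q) (hσ : Function.Involutive σ)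
    {m : ℕ} (a b : F) (α α' : Fin m → F) (x : (Fin m → F) × F) :
    Falpha q a b α x = 0 ∧ Falpha q a b α' x = 0 ↔
      conjSub σ ((fun i => translationCoeff σ a b (α i - α' i)) ⬝ᵥ x.1) = 0 ∧
        conjSub σ (x.2 + lastShift σ a b α' x.1) = 0 := by
  rw [Falpha_eq_conjSub hpow hσ, Falpha_eq_conjSub hpow hσ, ← lastShift_sub_lastShift,
    ← add_sub_add_left_eq_sub (c := x.2), map_sub]
  refine and_congr_left fun h => ?_
  rw [h, sub_zero]

theorem card_Falpha_common_zeros {q : ℕ} (hpow : ∀ x, σ x = x ^ q) (hσ : Function.Involutive σ)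
    (hσ' : σ ≠ RingHom.id F) {m : ℕ} (a b : F) {α α' : Fin m → F}
    (h : ∃ i, translationCoeff σ a b (α i - α' i) ≠ 0) :
    Nat.card {x : (Fin m → F) × F // Falpha q a b α x = 0 ∧ Falpha q a b α' x = 0} =
      Nat.card F ^ m := by
  let L : Module.Dual F (Fin m → F) :=
    dotProductEquiv F (Fin m) fun i => translationCoeff σ a b (α i - α' i)
  have hL : Function.Surjective L.toAddMonoidHom :=
    LinearMap.surjective ((LinearEquiv.map_ne_zero_iff _).mpr (Function.ne_iff.mpr h))
  calc
    _ = Nat.card {x : (Fin m → F) × F // conjSub σ (L x.1) = 0 ∧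
          conjSub σ (x.2 + lastShift σ a b α' x.1) = 0} :=
      Nat.card_congr (Equiv.subtypeEquivRight (Falpha_eq_zero_and_iff hpow hσ a b α α'))
    _ = Nat.card ((conjSub σ).comp L.toAddMonoidHom).ker * Nat.card (conjSub σ).ker :=
      card_prod_subtype_shear (fun u => conjSub σ (L u) = 0) (fun t => conjSub σ t = 0) _
    _ = Nat.card (Fin m → F) := card_ker_conjSub_comp_mul_card_ker hσ hσ' hL
    _ = Nat.card F ^ m := by rw [Nat.card_fun, Nat.card_fin]

end Involution

section FrobeniusInvolution

variable {F : Type*} [Field F] [Fintype F] {q : ℕ}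

theorem exists_ringHom_eq_pow (hF : Fintype.card F = q ^ 2) :
    ∃ σ : F →+* F, ∀ x, σ x = x ^ q := by
  have hq : IsPrimePow q :=
    (isPrimePow_pow_iff two_ne_zero).mp (hF ▸ FiniteField.isPrimePow_card F)
  obtain ⟨p, k, hp, -, rfl⟩ := hq
  have : Fact p.Prime := ⟨hp.nat_prime⟩
  have : CharP F p := charP_of_card_eq_prime_pow (hF.trans (pow_mul p k 2).symm)
  exact ⟨iterateFrobenius F p k, iterateFrobenius_def p k⟩

theorem involutive_of_eq_pow (hF : Fintype.card F = q ^ 2) {σ : F → F}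
    (hpow : ∀ x, σ x = x ^ q) : Function.Involutive σ := fun x => by
  rw [hpow, hpow, ← pow_mul, ← sq, ← hF, FiniteField.pow_card]

theorem ne_id_of_eq_pow (hF : Fintype.card F = q ^ 2) {σ : F →+* F}
    (hpow : ∀ x, σ x = x ^ q) : σ ≠ RingHom.id F := by
  rintro rfl
  have hq : 1 < q := (one_lt_pow_iff two_ne_zero).mp (hF ▸ Fintype.one_lt_card)
  have hunits : ∀ x : Fˣ, x ^ (q - 1) = 1 := fun x => by
    refine mul_right_cancel (b := x) (Units.ext ?_)
    rw [pow_sub_one_mul (by omega), one_mul, Units.val_pow_eq_pow_val, ← hpow, RingHom.id_apply]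
  have hdvd : q ^ 2 - 1 ∣ q - 1 := hF ▸ (FiniteField.forall_pow_eq_one_iff F (q - 1)).mp hunits
  have hle := Nat.le_of_dvd (by omega) hdvd
  have : q < q ^ 2 := lt_self_pow₀ hq one_lt_two
  omega

theorem exists_translation_coeff_ne_zero (hF : Fintype.card F = q ^ 2) {a b : F}
    (hab : 4 * a ^ (q + 1) + (b ^ q - b) ^ 2 ≠ 0) {ι : Type*} {α α' : ι → F} (hα : α ≠ α') :
    ∃ i, 2 * a * (α i - α' i) + (b ^ q - b) * (α i - α' i) ^ q ≠ 0 := by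
  obtain ⟨σ, hpow⟩ := exists_ringHom_eq_pow hF
  obtain ⟨i, hi⟩ := Function.ne_iff.mp hα
  have hinj : Function.Injective (translationCoeff σ a b) :=
    translationCoeff_injective (involutive_of_eq_pow hF hpow) <| by
      simpa only [conjSub_apply, hpow, ← pow_succ] using hab
  refine ⟨i, ?_⟩
  simpa only [translationCoeff_apply, conjSub_apply, hpow] using
    (map_ne_zero_iff _ hinj).mpr (sub_ne_zero.mpr hi)

theorem mutually_intersecting_general [DecidableEq F] (hF : Fintype.card F = q ^ 2) (a b : F)
    {m : ℕ} {α α' : Fin m → F}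
    (h : ∃ i, 2 * a * (α i - α' i) + (b ^ q - b) * (α i - α' i) ^ q ≠ 0) :
    (Finset.univ.filter (fun x : (Fin m → F) × F =>
        Falpha q a b α x = 0 ∧ Falpha q a b α' x = 0)).card = q ^ (2 * m) := by
  obtain ⟨σ, hpow⟩ := exists_ringHom_eq_pow hF
  have hcoeff : ∃ i, translationCoeff σ a b (α i - α' i) ≠ 0 := by
    simpa only [translationCoeff_apply, conjSub_apply, hpow] using h
  rw [← Fintype.card_subtype, ← Nat.card_eq_fintype_card,
    card_Falpha_common_zeros hpow (involutive_of_eq_pow hF hpow) (ne_id_of_eq_pow hF hpow) a b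
      hcoeff, Nat.card_eq_fintype_card, hF, pow_mul]

end FrobeniusInvolution

/-- Two distinct translates of the BM quasi-Hermitian variety meet in exactly
`q^(2n-2)` affine points. -/
theorem mutually_intersecting (q : ℕ) (hq : IsPrimePow q)
    (F : Type*) [Field F] [Fintype F] [DecidableEq F] (hF : Fintype.card F = q ^ 2)
    (a b : F) (ha : a ≠ 0) (hb : b ^ q ≠ b)
    (hab : 4 * a ^ (q + 1) + (b ^ q - b) ^ 2 ≠ 0)
    (n : ℕ) (hn : 2 ≤ n) (α α' : Fin (n - 1) → F) (hαα' : α ≠ α') :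
    (Finset.univ.filter (fun x : (Fin (n - 1) → F) × F =>
        Falpha q a b α x = 0 ∧ Falpha q a b α' x = 0)).card = q ^ (2 * n - 2) := by
  rw [← Nat.mul_sub_one]
  exact mutually_intersecting_general hF a b (exists_translation_coeff_ne_zero hF hab hαα')
end

section
/- Let n ≥ 2 and let α, α' ∈ F^{n−1} with α ≠ α'. Then the affine zero sets {x ∈ F^n : F_α(x) = 0} and {x ∈ F^n : F_{α'}(x) = 0} are distinct (i.e. the varieties V(F_α) and V(F_{α'}) are different). -/
/-!
Let `σ` be the involution `x ↦ x ^ q` and `Q z = a z² - b z σ(z)`, with polar form `B`. Then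
`F_α(x, y) = σ w - w` for `w = y + ∑ i, (Q(xᵢ) + B(xᵢ, αᵢ))`, so `V(F_α)` is the set of points
where `w` is fixed by `σ`, and over each `x` it has a point, with `w = 0`. If `V(F_α) = V(F_α')`,
comparing the two values of `w` shows that `B(x, d)` is fixed by `σ` for every `x ∈ F`, where
`d = αᵢ - α'ᵢ`. Now `σ B(x, d) - B(x, d) = σ(m x) - m x` with `m = 2 a d + (σ b - b) σ(d)`. If
`m x` is fixed for all `x`, then `m = 0` because `σ` is not the identity, and eliminating `σ(d)`
between `m = 0` and `σ m = 0` gives `(4 a σ(a) + (σ b - b)²) d = 0`.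
-/

open Function
open QuadraticMap (polar)

section Involution

variable {R : Type*} [CommRing R] (σ : R →+* R) (a b : R)

/-- The function `z ↦ a z² - b z σ(z)`, an `R`-valued quadratic map over the subring fixed by `σ`,
left unbundled. It and its polar form make up the `w` with `F_α = σ w - w`. -/
def twistedForm (z : R) : R :=
  a * z ^ 2 - b * (z * σ z)

/-- The affine quasi-Hermitian variety with parameters `a`, `b`, `α`, for an endomorphism `σ` in
place of `x ↦ x ^ q`. It is encoded as the set of points where the primitive `w` of
`F_α = σ w - w` is fixed by `σ`; see `setOf_Falpha_eq_zero`. -/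
def twistedVariety {ι : Type*} [Fintype ι] (α : ι → R) : Set ((ι → R) × R) :=
  {p | IsFixedPt σ
    (p.2 + ∑ i, (twistedForm σ a b (p.1 i) + polar (twistedForm σ a b) (p.1 i) (α i)))}

theorem polar_twistedForm (x d : R) :
    polar (twistedForm σ a b) x d = 2 * a * x * d - b * (x * σ d + d * σ x) := by
  simp only [polar, twistedForm, map_add]
  ring

theorem polar_twistedForm_sub_right (x d e : R) :
    polar (twistedForm σ a b) x (d - e) =
      polar (twistedForm σ a b) x d - polar (twistedForm σ a b) x e := by
  simp only [polar_twistedForm, map_sub]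
  ring

theorem polar_twistedForm_zero_left (d : R) : polar (twistedForm σ a b) 0 d = 0 := by
  simp [polar_twistedForm]

variable {σ a b}

theorem map_twistedForm_sub_self (hσ : Involutive σ) (x : R) :
    σ (twistedForm σ a b x) - twistedForm σ a b x =
      σ a * σ x ^ 2 - a * x ^ 2 - (σ b - b) * (σ x * x) := by
  simp only [twistedForm, map_sub, map_mul, map_pow, hσ x]
  ring

theorem map_polar_twistedForm_sub_self (hσ : Involutive σ) (x d : R) :
    σ (polar (twistedForm σ a b) x d) - polar (twistedForm σ a b) x d =
      σ ((2 * a * d + (σ b - b) * σ d) * x) - (2 * a * d + (σ b - b) * σ d) * x := by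
  simp only [polar_twistedForm, map_add, map_sub, map_mul, map_ofNat, hσ _]
  ring

theorem eq_zero_of_forall_isFixedPt_mul [IsDomain R] (hid : σ ≠ RingHom.id R) {m : R}
    (hm : ∀ x, IsFixedPt σ (m * x)) : m = 0 := by
  obtain ⟨z, hz⟩ : ∃ z, σ z ≠ z := by
    contrapose! hid
    exact RingHom.ext hid
  have hm_fixed : σ m = m := by simpa using (hm 1).eq
  have hmz : m * σ z = m * z := by simpa [hm_fixed] using (hm z).eq
  exact (mul_eq_mul_left_iff.1 hmz).resolve_left hz

theorem eq_zero_of_two_mul_add_eq_zero [IsDomain R] (hσ : Involutive σ)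
    (hab : 4 * (a * σ a) + (σ b - b) ^ 2 ≠ 0) {d : R}
    (hd : 2 * a * d + (σ b - b) * σ d = 0) : d = 0 := by
  have hσd : 2 * σ a * σ d + (b - σ b) * d = 0 := by
    simpa only [map_add, map_sub, map_mul, map_ofNat, map_zero, hσ _] using congrArg σ hd
  have h : (4 * (a * σ a) + (σ b - b) ^ 2) * d = 0 := by
    linear_combination 2 * σ a * hd - (σ b - b) * hσd
  exact (mul_eq_zero.1 h).resolve_left hab

theorem eq_zero_of_forall_isFixedPt_polar [IsDomain R] (hσ : Involutive σ)
    (hid : σ ≠ RingHom.id R) (hab : 4 * (a * σ a) + (σ b - b) ^ 2 ≠ 0) {d : R}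
    (hd : ∀ x, IsFixedPt σ (polar (twistedForm σ a b) x d)) : d = 0 :=
  eq_zero_of_two_mul_add_eq_zero hσ hab <| eq_zero_of_forall_isFixedPt_mul hid fun x ↦ by
    rw [IsFixedPt, ← sub_eq_zero, ← map_polar_twistedForm_sub_self hσ, (hd x).eq, sub_self]

variable {ι : Type*} [Fintype ι] {α α' : ι → R}

theorem isFixedPt_sum_polar_of_twistedVariety_eq
    (h : twistedVariety σ a b α = twistedVariety σ a b α') (x : ι → R) :
    IsFixedPt σ (∑ i, polar (twistedForm σ a b) (x i) (α i - α' i)) := by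
  set s : (ι → R) → R := fun β ↦
    ∑ i, (twistedForm σ a b (x i) + polar (twistedForm σ a b) (x i) (β i)) with hs
  have hmem : (x, -s α') ∈ twistedVariety σ a b α' := by
    simp [twistedVariety, IsFixedPt, hs]
  rw [← h] at hmem
  have hsub : -s α' + s α = ∑ i, polar (twistedForm σ a b) (x i) (α i - α' i) := by
    simp only [hs, polar_twistedForm_sub_right, Finset.sum_add_distrib, Finset.sum_sub_distrib]
    ring
  exact hsub ▸ hmem

theorem isFixedPt_polar_of_twistedVariety_eq
    (h : twistedVariety σ a b α = twistedVariety σ a b α') (i : ι) (x : R) :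
    IsFixedPt σ (polar (twistedForm σ a b) x (α i - α' i)) := by
  classical
  have hsum : ∑ j, polar (twistedForm σ a b) (Pi.single (M := fun _ ↦ R) i x j) (α j - α' j) =
      polar (twistedForm σ a b) x (α i - α' i) := by
    rw [Fintype.sum_eq_single i fun j hj ↦ by
      rw [Pi.single_eq_of_ne hj, polar_twistedForm_zero_left], Pi.single_eq_same]
  exact hsum ▸ isFixedPt_sum_polar_of_twistedVariety_eq h (Pi.single i x)

theorem distinct_varieties_general [IsDomain R] (hσ : Involutive σ) (hid : σ ≠ RingHom.id R)
    (hab : 4 * (a * σ a) + (σ b - b) ^ 2 ≠ 0) (hα : α ≠ α') :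
    twistedVariety σ a b α ≠ twistedVariety σ a b α' := fun h ↦
  hα <| funext fun i ↦ sub_eq_zero.1 <|
    eq_zero_of_forall_isFixedPt_polar hσ hid hab (isFixedPt_polar_of_twistedVariety_eq h i)

end Involution

section FiniteField

variable {F : Type*} [Field F] {q : ℕ}

theorem exists_involutive_ringHom_eq_pow [Fintype F] (hF : Fintype.card F = q ^ 2) :
    ∃ σ : F →+* F, Involutive σ ∧ ∀ x, σ x = x ^ q := by
  obtain ⟨p, hchar⟩ := CharP.exists F
  obtain ⟨n, hp, hn⟩ := FiniteField.card F p
  have : Fact p.Prime := ⟨hp⟩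
  obtain ⟨k, -, rfl⟩ := (Nat.dvd_prime_pow hp).1 (hn ▸ hF ▸ dvd_pow_self q two_ne_zero)
  refine ⟨iterateFrobenius F p k, fun x ↦ ?_, iterateFrobenius_def p k⟩
  rw [iterateFrobenius_def, iterateFrobenius_def, ← pow_mul, ← sq, ← hF, FiniteField.pow_card]

theorem setOf_Falpha_eq_zero {σ : F →+* F} (hσ : Involutive σ) (hσq : ∀ x, σ x = x ^ q)
    {m : ℕ} (a b : F) (α : Fin m → F) :
    {x | Falpha q a b α x = 0} = twistedVariety σ a b α := by
  ext ⟨x, y⟩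
  rw [twistedVariety, Set.mem_ofPred_eq, Set.mem_ofPred_eq, IsFixedPt, ← sub_eq_zero (b := _ + _),
    map_add, map_sum, add_sub_add_comm, ← Finset.sum_sub_distrib, Falpha]
  simp only [map_add, add_sub_add_comm, map_twistedForm_sub_self hσ,
    map_polar_twistedForm_sub_self hσ, map_mul, map_sub, map_ofNat, hσ _]
  simp only [hσq]
  congr! 3
  ring

end FiniteField

/-- Distinct parameters `α ≠ α'` give distinct affine zero sets `V(F_α) ≠ V(F_{α'})`. -/
theorem distinct_varieties (q : ℕ) (hq : IsPrimePow q)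
    (F : Type*) [Field F] [Fintype F] [DecidableEq F] (hF : Fintype.card F = q ^ 2)
    (a b : F) (ha : a ≠ 0) (hb : b ^ q ≠ b)
    (hab : 4 * a ^ (q + 1) + (b ^ q - b) ^ 2 ≠ 0)
    (n : ℕ) (hn : 2 ≤ n) (α α' : Fin (n - 1) → F) (hαα' : α ≠ α') :
    {x : (Fin (n - 1) → F) × F | Falpha q a b α x = 0} ≠
      {x : (Fin (n - 1) → F) × F | Falpha q a b α' x = 0} := by
  obtain ⟨σ, hσ, hσq⟩ := exists_involutive_ringHom_eq_pow hF
  have hid : σ ≠ RingHom.id F := fun h ↦ hb (by rw [← hσq, h, RingHom.id_apply])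
  rw [setOf_Falpha_eq_zero hσ hσq, setOf_Falpha_eq_zero hσ hσq]
  exact distinct_varieties_general hσ hid (by simpa only [hσq, ← pow_succ'] using hab) hαα'
end

section
/- Let n ≥ 2. For every α ∈ F^{n−1}, the number of points x ∈ F^n with F_α(x) = 0 equals q^{2n−1}. In particular the Buekenhout–Metz quasi-Hermitian variety B_{a,b} has exactly q^{2n−1} affine points. -/
/-!
Put `φ t = a t² - b t^(q+1)`. The `q`-th power map is an involutive automorphism of `F`, and the
`i`-th summand of `F_α` is `δ^q - δ` with `δ = φ (x_i + α_i) - φ (α_i)`. By additivity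
`F_α (x, y) = z^q - z` for `z = y + ∑ i, (φ (x_i + α_i) - φ (α_i))`, so the shear `(x, y) ↦ (x, z)`
carries the zero set of `F_α` to `F^m × K`, where `K = {z | z^q = z}` has `q` elements.
-/

open Finset

section FixedPoints

variable {F : Type*} [Field F] [Fintype F] {q k : ℕ}

theorem isPrimePow_of_card_eq_pow (hF : Fintype.card F = q ^ k) : IsPrimePow q := by
  have hk : k ≠ 0 := by
    rintro rfl
    exact Fintype.one_lt_card.ne' (hF.trans (pow_zero q))
  exact (isPrimePow_pow_iff hk).1 (hF ▸ FiniteField.isPrimePow_card F)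

theorem exists_ringHom_eq_pow_of_card_eq_pow (hF : Fintype.card F = q ^ k) :
    ∃ σ : F →+* F, ∀ x, σ x = x ^ q := by
  obtain ⟨p, r, hp, -, rfl⟩ := isPrimePow_of_card_eq_pow hF
  have : Fact p.Prime := ⟨hp.nat_prime⟩
  have : CharP F p := charP_of_card_eq_prime_pow (hF.trans (pow_mul p r k).symm)
  exact ⟨iterateFrobenius F p r, iterateFrobenius_def p r⟩

open Polynomial in
theorem card_filter_pow_eq_self [DecidableEq F] (hF : Fintype.card F = q ^ k) :
    #{z : F | z ^ q = z} = q := by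
  have hq : 1 < q := (isPrimePow_of_card_eq_pow hF).one_lt
  have hne : (X ^ Fintype.card F - X : F[X]) ≠ 0 :=
    FiniteField.X_pow_card_sub_X_ne_zero F Fintype.one_lt_card
  have hdvd : (X ^ q - X : F[X]) ∣ X ^ Fintype.card F - X := by
    simpa only [hF, pow_one] using dvd_pow_pow_sub_self_of_dvd (r := (X : F[X])) (one_dvd k)
  have hsplits : (X ^ q - X : F[X]).Splits := by
    refine Splits.of_dvd ?_ hne hdvd
    simpa only [Nat.card_eq_fintype_card] using splits_X_pow_nat_card_sub_X (K := F)
  have hnodup : (X ^ q - X : F[X]).roots.Nodup := by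
    refine Multiset.nodup_of_le (roots.le_of_dvd hne hdvd) ?_
    rw [FiniteField.roots_X_pow_card_sub_X]
    exact univ.nodup
  have hroots : ({z : F | z ^ q = z} : Finset F) = (X ^ q - X : F[X]).roots.toFinset := by
    ext z
    simp [FiniteField.X_pow_card_sub_X_ne_zero F hq, sub_eq_zero]
  rw [hroots, Multiset.toFinset_card_of_nodup hnodup, ← hsplits.natDegree_eq_card_roots,
    FiniteField.X_pow_card_sub_X_natDegree_eq F hq]

end FixedPoints

theorem card_filter_snd_add_apply_fst {V A : Type*} [Fintype V] [Fintype A] [AddGroup A]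
    (g : V → A) (P : A → Prop) [DecidablePred P] :
    #{x : V × A | P (x.2 + g x.1)} = Fintype.card V * #{z | P z} := by
  rw [← card_univ, ← card_product]
  exact card_equiv (Equiv.prodShear (Equiv.refl V) fun v => Equiv.addRight (g v)) (by simp)

/-- The one-variable quasi-Hermitian form `φ t = a t² - b t^(q+1)`, chosen so that `φ^q - φ` is
the contribution of one coordinate to the affine equation `F₀` of `B_{a,b}`. -/
def quasiHermitianForm {R : Type*} [CommRing R] (q : ℕ) (a b t : R) : R :=
  a * t ^ 2 - b * t ^ (q + 1)

theorem quasiHermitianForm_increment_pow_sub {R : Type*} [CommRing R] {q : ℕ} {σ : R →+* R}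
    (hσ : ∀ x, σ x = x ^ q) (hinv : Function.Involutive σ) (a b s t : R) :
    let δ := quasiHermitianForm q a b (t + s) - quasiHermitianForm q a b s
    δ ^ q - δ = a ^ q * t ^ (2 * q) - a * t ^ 2 - (b ^ q - b) * t ^ (q + 1)
      + (2 * a ^ q * s ^ q - (b ^ q - b) * s) * t ^ q
      - (2 * a * s + (b ^ q - b) * s ^ q) * t := by
  simp only [quasiHermitianForm, pow_succ _ q, mul_comm 2 q, pow_mul, ← hσ, map_sub, map_add,
    map_mul, map_pow, hinv s, hinv t]
  ring

section PointCount

variable {F : Type*} [Field F] {q m : ℕ}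

/-- The displacement of the last coordinate under the shear that carries the zero set of `F_α` to
the set of points whose last coordinate lies in `K`. -/
def shearOffset (q : ℕ) (a b : F) (α v : Fin m → F) : F :=
  ∑ i, (quasiHermitianForm q a b (v i + α i) - quasiHermitianForm q a b (α i))

theorem Falpha_eq_pow_sub [Fintype F] (hF : Fintype.card F = q ^ 2) (a b : F) (α : Fin m → F)
    (x : (Fin m → F) × F) :
    Falpha q a b α x
      = (x.2 + shearOffset q a b α x.1) ^ q - (x.2 + shearOffset q a b α x.1) := by
  obtain ⟨σ, hσ⟩ := exists_ringHom_eq_pow_of_card_eq_pow hF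
  have hinv : Function.Involutive σ := fun z => by
    rw [hσ, hσ, ← pow_mul, ← sq, ← hF, FiniteField.pow_card]
  have hsum : Falpha q a b α x
      = x.2 ^ q - x.2 + (shearOffset q a b α x.1 ^ q - shearOffset q a b α x.1) := by
    rw [Falpha, shearOffset, ← hσ (∑ i, _), map_sum, ← sum_sub_distrib]
    simp only [hσ, quasiHermitianForm_increment_pow_sub hσ hinv]
  rw [hsum, ← hσ (x.2 + _), map_add, hσ, hσ]
  ring

theorem affine_point_count_general [Fintype F] [DecidableEq F] (hF : Fintype.card F = q ^ 2)
    (a b : F) (α : Fin m → F) :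
    #{x : (Fin m → F) × F | Falpha q a b α x = 0} = q ^ (2 * m + 1) :=
  calc #{x : (Fin m → F) × F | Falpha q a b α x = 0}
    _ = #{x : (Fin m → F) × F |
          (x.2 + shearOffset q a b α x.1) ^ q = x.2 + shearOffset q a b α x.1} := by
      simp only [Falpha_eq_pow_sub hF, sub_eq_zero]
    _ = Fintype.card (Fin m → F) * #{z : F | z ^ q = z} :=
      card_filter_snd_add_apply_fst (shearOffset q a b α) fun z => z ^ q = z
    _ = q ^ (2 * m + 1) := by
      rw [card_filter_pow_eq_self hF, Fintype.card_fun, Fintype.card_fin, hF, ← pow_mul, ← pow_succ]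

end PointCount

/-- Each variety `V(F_α)` has exactly `q^(2n-1)` affine points. -/
theorem affine_point_count (q : ℕ) (hq : IsPrimePow q)
    (F : Type*) [Field F] [Fintype F] [DecidableEq F] (hF : Fintype.card F = q ^ 2)
    (a b : F) (ha : a ≠ 0) (hb : b ^ q ≠ b)
    (n : ℕ) (hn : 2 ≤ n) (α : Fin (n - 1) → F) :
    (Finset.univ.filter (fun x : (Fin (n - 1) → F) × F =>
        Falpha q a b α x = 0)).card = q ^ (2 * n - 1) := by
  rw [affine_point_count_general hF, show 2 * (n - 1) + 1 = 2 * n - 1 by omega]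
end

section
/- Let n ≥ 2. For every α ∈ F^{n−1} and every x ∈ F^n, the value F_α(x) has trace zero, i.e. F_α(x) + F_α(x)^q = 0; equivalently F_α takes all its values in the q-element set T₀ = {u ∈ F : u + u^q = 0}. -/
/-!
Write `σ y = y ^ q`, an involutive automorphism of `F` since `|F| = q ^ 2`. With the quadratic map
`Q y = a y² - b (y σ y)`, translating each coordinate by `α i` gives `F_α x = σ w - w` for
`w = x_n + ∑ i, (Q (x i + α i) - Q (α i))`, because the norm `y σ y` is fixed by `σ`. Elements of
the form `σ w - w` have trace zero.
-/

section Involution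

theorem map_sub_self_add_map_eq_zero {A S : Type*} [AddGroup A] [FunLike S A A]
    [AddMonoidHomClass S A A] {σ : S} (hσ : Function.Involutive σ) (w : A) :
    (σ w - w) + σ (σ w - w) = 0 := by
  rw [map_sub, hσ w, sub_add_sub_cancel, sub_self]

theorem map_mul_map_self {M S : Type*} [CommMagma M] [FunLike S M M] [MulHomClass S M M]
    {σ : S} (hσ : Function.Involutive σ) (y : M) : σ (y * σ y) = y * σ y := by
  rw [map_mul, hσ y, mul_comm]

variable {R : Type*} [CommRing R] (σ : R →+* R) (a b : R)

/-- The map `y ↦ a y² - b N(y)`, where `N(y) = y σ(y)` is the norm attached to the involution `σ`.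
For `σ y = y ^ q` it is `a y² - b y^(q+1)`. Its translates by the entries of `α` produce `F_α`. -/
def squareSubNorm (y : R) : R :=
  a * y ^ 2 - b * (y * σ y)

/-- An element `w` with `F_α(x) = σ(w) - w` when `σ y = y ^ q`. The point `x` is encoded as for
`Falpha`, with its last coordinate separate. -/
def Falpha.primitive {m : ℕ} (α : Fin m → R) (x : (Fin m → R) × R) : R :=
  x.2 + ∑ i, (squareSubNorm σ a b (x.1 i + α i) - squareSubNorm σ a b (α i))

variable {σ}

theorem map_squareSubNorm_sub_self (hσ : Function.Involutive σ) (y : R) :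
    σ (squareSubNorm σ a b y) - squareSubNorm σ a b y =
      σ a * σ y ^ 2 - a * y ^ 2 - (σ b - b) * (y * σ y) := by
  simp only [squareSubNorm, map_sub, map_mul σ a, map_mul σ b, map_mul_map_self hσ, map_pow]
  ring

theorem map_squareSubNorm_add_sub_sub_self (hσ : Function.Involutive σ) (c y : R) :
    σ (squareSubNorm σ a b (y + c) - squareSubNorm σ a b c) -
        (squareSubNorm σ a b (y + c) - squareSubNorm σ a b c) =
      σ a * σ y ^ 2 - a * y ^ 2 - (σ b - b) * (σ y * y)
        + (2 * σ a * σ c - (σ b - b) * c) * σ y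
        - (2 * a * c + (σ b - b) * σ c) * y := by
  rw [map_sub, sub_sub_sub_comm, map_squareSubNorm_sub_self a b hσ,
    map_squareSubNorm_sub_self a b hσ, map_add]
  ring

end Involution

section PowerMap

variable {q : ℕ}

theorem Falpha_eq_map_primitive_sub {F : Type*} [Field F] {σ : F →+* F}
    (hσ : Function.Involutive σ) (hpow : ∀ y, σ y = y ^ q) {m : ℕ} (a b : F) (α : Fin m → F)
    (x : (Fin m → F) × F) :
    Falpha q a b α x = σ (Falpha.primitive σ a b α x) - Falpha.primitive σ a b α x := by
  simp only [Falpha.primitive]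
  rw [map_add, add_sub_add_comm, map_sum, ← Finset.sum_sub_distrib]
  simp only [map_squareSubNorm_add_sub_sub_self a b hσ]
  simp only [Falpha, pow_succ _ q, mul_comm 2 q, pow_mul, hpow]

theorem exists_ringHom_eq_pow_of_card_eq_pow_s3 {R : Type*} [CommRing R] [IsDomain R] [Fintype R]
    (hq : IsPrimePow q) {d : ℕ} (hR : Fintype.card R = q ^ d) :
    ∃ σ : R →+* R, ∀ y, σ y = y ^ q := by
  obtain ⟨p, k, hp, -, rfl⟩ := hq
  have : Fact p.Prime := ⟨hp.nat_prime⟩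
  have : CharP R p := charP_of_card_eq_prime_pow (hR.trans (pow_mul p k d).symm)
  exact ⟨iterateFrobenius R p k, iterateFrobenius_def p k⟩

theorem pow_involutive_of_card_eq_sq {G₀ : Type*} [GroupWithZero G₀] [Fintype G₀]
    (hG₀ : Fintype.card G₀ = q ^ 2) : Function.Involutive fun y : G₀ => y ^ q := fun y => by
  change (y ^ q) ^ q = y
  rw [← pow_mul, ← sq, ← hG₀, FiniteField.pow_card]

end PowerMap

/-- The form `F_α` takes all its values in `T₀ = {u | u + u^q = 0}`. -/
theorem values_have_trace_zero (q : ℕ) (hq : IsPrimePow q)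
    (F : Type*) [Field F] [Fintype F] (hF : Fintype.card F = q ^ 2)
    (a b : F) (ha : a ≠ 0) (hb : b ^ q ≠ b)
    (n : ℕ) (hn : 2 ≤ n) :
    ∀ (α : Fin (n - 1) → F) (x : (Fin (n - 1) → F) × F),
      Falpha q a b α x + (Falpha q a b α x) ^ q = 0 := by
  intro α x
  obtain ⟨σ, hpow⟩ := exists_ringHom_eq_pow_of_card_eq_pow_s3 hq hF
  have hσ : Function.Involutive σ := funext hpow ▸ pow_involutive_of_card_eq_sq hF
  rw [← hpow, Falpha_eq_map_primitive_sub hσ hpow]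
  exact map_sub_self_add_map_eq_zero hσ _
end

section
/- Let n ≥ 2 and let x = (x₁,…,x_n) and x' = (x₁',…,x_n') be two distinct elements of W = F^{n−1} × C. Then there exists α ∈ F^{n−1} such that F_α(x) ≠ F_α(x'). -/
/-!
Subtracting `F_0` from `F_α` leaves `∑ i, (α i ^ q * U (x i) + α i * V (x i))`, where
`(U y, V y)` is the image of `(y ^ q, y)` under a `2 × 2` matrix of determinant
`-(4 * a ^ (q + 1) + (b ^ q - b) ^ 2)`. The characters `c ↦ c ^ q` and `c ↦ c` are linearly
independent by Dedekind, so the values at `α = c • e_i` determine `U (x i)` and `V (x i)`, hence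
`x i`. What remains of `F_0` is `x_n ^ q - x_n`, which determines `x_n` up to `K`.
-/

theorem linearIndependent_pair_monoidHom {M R : Type*} [Monoid M] [CommRing R]
    [IsDomain R] {f g : M →* R} (hfg : f ≠ g) :
    LinearIndependent R ![(f : M → R), g] := by
  have hinj : Function.Injective ![f, g] := by
    simpa [Function.Injective, Fin.forall_fin_two, eq_comm] using hfg
  have hpair : (fun φ : M →* R => (φ : M → R)) ∘ ![f, g] = ![(f : M → R), g] := by
    ext i
    fin_cases i <;> rfl
  exact hpair ▸ (linearIndependent_monoidHom M R).comp _ hinj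

section Coefficients

variable {R : Type*} [CommRing R]

/-- The coefficient of `α_i ^ q` in `F_α`, as a function of `y = x_i`. -/
def powCoeff (q : ℕ) (a b y : R) : R :=
  2 * a ^ q * y ^ q - (b ^ q - b) * y

/-- The coefficient of `α_i` in `F_α`, as a function of `y = x_i`. -/
def linCoeff (q : ℕ) (a b y : R) : R :=
  -((b ^ q - b) * y ^ q + 2 * a * y)

theorem mul_powCoeff_add_mul_linCoeff (q : ℕ) (a b y : R) :
    (b ^ q - b) * powCoeff q a b y + 2 * a ^ q * linCoeff q a b y =
      -(4 * a ^ (q + 1) + (b ^ q - b) ^ 2) * y := by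
  unfold powCoeff linCoeff
  ring

theorem eq_of_powCoeff_eq_of_linCoeff_eq [NoZeroDivisors R] {q : ℕ} {a b y z : R}
    (hab : 4 * a ^ (q + 1) + (b ^ q - b) ^ 2 ≠ 0)
    (hpow : powCoeff q a b y = powCoeff q a b z) (hlin : linCoeff q a b y = linCoeff q a b z) :
    y = z := by
  apply mul_left_cancel₀ (neg_ne_zero.mpr hab)
  rw [← mul_powCoeff_add_mul_linCoeff, ← mul_powCoeff_add_mul_linCoeff, hpow, hlin]

end Coefficients

section Separation

variable {F : Type*} [Field F] {q m : ℕ} {a b : F}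

theorem Falpha_eq_Falpha_zero_add (hq : q ≠ 0) (α : Fin m → F) (x : (Fin m → F) × F) :
    Falpha q a b α x = Falpha q a b 0 x +
      ∑ i, (α i ^ q * powCoeff q a b (x.1 i) + α i * linCoeff q a b (x.1 i)) := by
  unfold Falpha powCoeff linCoeff
  rw [add_assoc, ← Finset.sum_add_distrib]
  congr! 2 with i
  simp only [Pi.zero_apply, zero_pow hq]
  ring

theorem Falpha_single (hq : q ≠ 0) (i : Fin m) (c : F) (x : (Fin m → F) × F) :
    Falpha q a b (Pi.single i c) x = Falpha q a b 0 x +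
      (c ^ q * powCoeff q a b (x.1 i) + c * linCoeff q a b (x.1 i)) := by
  rw [Falpha_eq_Falpha_zero_add hq, Fintype.sum_eq_single i, Pi.single_eq_same]
  intro j hj
  rw [Pi.single_eq_of_ne hj, zero_pow hq, zero_mul, zero_mul, add_zero]

theorem fst_eq_of_forall_Falpha_eq (hq : q ≠ 0) (hK : ∃ c : F, c ^ q ≠ c)
    (hab : 4 * a ^ (q + 1) + (b ^ q - b) ^ 2 ≠ 0) {x x' : (Fin m → F) × F}
    (h : ∀ α, Falpha q a b α x = Falpha q a b α x') : x.1 = x'.1 := by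
  obtain ⟨c₀, hc₀⟩ := hK
  have hchar : powMonoidHom q ≠ MonoidHom.id F := fun heq => hc₀ (DFunLike.congr_fun heq c₀)
  funext i
  have hcombination :
      powCoeff q a b (x.1 i) • ⇑(powMonoidHom q : F →* F) +
          linCoeff q a b (x.1 i) • ⇑(MonoidHom.id F) =
        powCoeff q a b (x'.1 i) • ⇑(powMonoidHom q : F →* F) +
          linCoeff q a b (x'.1 i) • ⇑(MonoidHom.id F) := by
    funext c
    have hsingle := h (Pi.single i c)
    rw [Falpha_single hq, Falpha_single hq, h 0] at hsingle
    simpa [mul_comm] using add_left_cancel hsingle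
  obtain ⟨hpow, hlin⟩ := (linearIndependent_pair_monoidHom hchar).eq_of_pair hcombination
  exact eq_of_powCoeff_eq_of_linCoeff_eq hab hpow hlin

theorem snd_pow_sub_eq_of_Falpha_eq {α : Fin m → F} {x x' : (Fin m → F) × F}
    (hfst : x.1 = x'.1) (h : Falpha q a b α x = Falpha q a b α x') :
    x.2 ^ q - x.2 = x'.2 ^ q - x'.2 := by
  unfold Falpha at h
  rw [hfst] at h
  exact add_right_cancel h

theorem separating_form_general (hq : q ≠ 0) (hK : ∃ c : F, c ^ q ≠ c)
    (hab : 4 * a ^ (q + 1) + (b ^ q - b) ^ 2 ≠ 0)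
    {C : Set F} (hC : C.InjOn fun c => c ^ q - c)
    {x x' : (Fin m → F) × F} (hx : x.2 ∈ C) (hx' : x'.2 ∈ C) (hne : x ≠ x') :
    ∃ α : Fin m → F, Falpha q a b α x ≠ Falpha q a b α x' := by
  by_contra! h
  have hfst : x.1 = x'.1 := fst_eq_of_forall_Falpha_eq hq hK hab h
  have hsnd : x.2 = x'.2 := hC hx hx' (snd_pow_sub_eq_of_Falpha_eq hfst (h 0))
  exact hne (Prod.ext hfst hsnd)

end Separation

theorem sub_pow_of_card_eq_pow {R : Type*} [CommRing R] [IsDomain R] [Fintype R] {q r : ℕ}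
    (hq : IsPrimePow q) (hR : Fintype.card R = q ^ r) (x y : R) :
    (x - y) ^ q = x ^ q - y ^ q := by
  obtain ⟨p, k, hp, -, rfl⟩ := hq
  have : Fact p.Prime := ⟨hp.nat_prime⟩
  have : CharP R p := charP_of_card_eq_prime_pow (hR.trans (pow_mul p k r).symm)
  exact sub_pow_char_pow x y k

theorem injOn_pow_sub_of_existsUnique {R : Type*} [Ring R] {q : ℕ} (hq : q ≠ 0)
    (hsub : ∀ x y : R, (x - y) ^ q = x ^ q - y ^ q) {C : Set R}
    (hC : ∀ x : R, ∃! c : R, c ∈ C ∧ (c - x) ^ q = c - x) :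
    C.InjOn fun c => c ^ q - c := by
  intro c hc d hd hcd
  have hcoset : (c - d) ^ q = c - d := by
    rw [hsub]
    exact sub_eq_sub_iff_sub_eq_sub.mp hcd
  exact (hC d).unique ⟨hc, hcoset⟩ ⟨hd, by rw [sub_self, zero_pow hq]⟩

/-- Two distinct points of `W = F^{n-1} × C` are separated by some form `F_α`. -/
theorem separating_form (q : ℕ) (hq : IsPrimePow q)
    (F : Type*) [Field F] [Fintype F] [DecidableEq F] (hF : Fintype.card F = q ^ 2)
    (a b : F) (ha : a ≠ 0) (hb : b ^ q ≠ b)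
    (hab : 4 * a ^ (q + 1) + (b ^ q - b) ^ 2 ≠ 0)
    (C : Finset F) (hC : ∀ x : F, ∃! c : F, c ∈ C ∧ (c - x) ^ q = c - x)
    (n : ℕ) (hn : 2 ≤ n)
    (x x' : (Fin (n - 1) → F) × F) (hx : x.2 ∈ C) (hx' : x'.2 ∈ C) (hne : x ≠ x') :
    ∃ α : Fin (n - 1) → F, Falpha q a b α x ≠ Falpha q a b α x' := by
  exact separating_form_general hq.ne_zero ⟨b, hb⟩ hab
    (injOn_pow_sub_of_existsUnique hq.ne_zero (sub_pow_of_card_eq_pow hq hF) hC) hx hx' hne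
end

section
/- Let n ≥ 2, let α₁,…,α_{n−1} ∈ F be arbitrary, set β_i = (b − b^q)α_i^q − 2aα_i for i = 1,…,n−1, and let α_n ∈ F satisfy α_n^q − α_n + a^q(α₁^{2q}+…+α_{n−1}^{2q}) − a(α₁²+…+α_{n−1}²) = (b^q − b)(α₁^{q+1}+…+α_{n−1}^{q+1}). Define the affine map g : F^n → F^n by g(x₁,…,x_n) = (x₁+α₁, …, x_{n−1}+α_{n−1}, x_n + β₁x₁ + … + β_{n−1}x_{n−1} + α_n). Then F₀(g(x)) = F₀(x) for every x ∈ F^n; in particular g preserves the set of affine points of the Buekenhout–Metz quasi-Hermitian variety B_{a,b}. -/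
/-- The affine equation `F₀` of the Buekenhout–Metz quasi-Hermitian variety
`B_{a,b}`; a point of `F^n` is a pair `(x₁,…,x_{n-1}, x_n)`. -/
def F0 {F : Type*} [Field F] (q : ℕ) {m : ℕ} (a b : F) (x : (Fin m → F) × F) : F :=
  x.2 ^ q - x.2 + ∑ i : Fin m,
    (a ^ q * x.1 i ^ (2 * q) - a * x.1 i ^ 2 - (b ^ q - b) * x.1 i ^ (q + 1))

/-!
Write `σ` for `x ↦ x ^ q`, an involutive automorphism of `F`, and `T y = σ y - y`. As `σ x * x` is
fixed by `σ`, the form is `F₀ = T ∘ h` with `h x = xₙ + ∑ i, (a * xᵢ ^ 2 - b * (σ xᵢ * xᵢ))`.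
Replacing `x` by `x + α` in `h` adds, besides `h α` and the term cancelled by `β * x`, an element of
the form `y + σ y`, which `T` kills. So `F₀ (g x) = F₀ x + F₀ (g 0)`, and the condition on `αₙ` says
`F₀ (g 0) = 0`.
-/

namespace BuekenhoutMetz

open Function

section Ring

variable {R : Type*} [CommRing R]

/-- The additive map `y ↦ σ y - y`. For an involution `σ` it takes the place of the trace
`y ↦ σ y + y`, its values being skew under `σ`. -/
def skewTrace (σ : R →+* R) : R →+ R :=
  (σ : R →+ R) - AddMonoidHom.id R

theorem skewTrace_apply (σ : R →+* R) (y : R) : skewTrace σ y = σ y - y :=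
  rfl

theorem skewTrace_add_map {σ : R →+* R} (hσ : Involutive σ) (y : R) :
    skewTrace σ (y + σ y) = 0 := by
  rw [skewTrace_apply, map_add, hσ y, add_comm, sub_self]

/-- The contribution of one coordinate `x = xᵢ`, `i < n`, to the function `potential`. -/
def coordTerm (σ : R →+* R) (a b x : R) : R :=
  a * x ^ 2 - b * (σ x * x)

/-- The coefficient `β` attached to `α` in the affine maps of the group `Ψ`. -/
def shiftCoeff (σ : R →+* R) (a b α : R) : R :=
  (b - σ b) * σ α - 2 * a * α

theorem skewTrace_coordTerm {σ : R →+* R} (hσ : Involutive σ) (a b x : R) :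
    skewTrace σ (coordTerm σ a b x) = σ a * σ x ^ 2 - a * x ^ 2 - (σ b - b) * (σ x * x) := by
  simp only [skewTrace_apply, coordTerm, map_sub, map_mul, map_pow, hσ x]
  ring

theorem coordTerm_add {σ : R →+* R} (hσ : Involutive σ) (a b x α : R) :
    coordTerm σ a b (x + α) =
      coordTerm σ a b x + coordTerm σ a b α - shiftCoeff σ a b α * x -
        (b * α * σ x + σ (b * α * σ x)) := by
  simp only [coordTerm, shiftCoeff, map_add, map_mul, hσ x]
  ring

theorem skewTrace_coordTerm_add {σ : R →+* R} (hσ : Involutive σ) (a b x α : R) :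
    skewTrace σ (coordTerm σ a b (x + α)) =
      skewTrace σ (coordTerm σ a b x) + skewTrace σ (coordTerm σ a b α) -
        skewTrace σ (shiftCoeff σ a b α * x) := by
  rw [coordTerm_add hσ, map_sub, skewTrace_add_map hσ, sub_zero, map_sub, map_add]

variable {ι : Type*} [Fintype ι]

/-- The function `h` of which `F₀` is the skew trace; a point is a pair `(x₁,…,x_{n-1}, x_n)`. -/
def potential (σ : R →+* R) (a b : R) (x : (ι → R) × R) : R :=
  x.2 + ∑ i, coordTerm σ a b (x.1 i)

/-- The affine map `g` of the group `Ψ` that sends the origin to the point `α`. -/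
def affineShift (σ : R →+* R) (a b : R) (α x : (ι → R) × R) : (ι → R) × R :=
  (fun i => x.1 i + α.1 i, x.2 + ∑ i, shiftCoeff σ a b (α.1 i) * x.1 i + α.2)

theorem skewTrace_potential_affineShift {σ : R →+* R} (hσ : Involutive σ) (a b : R)
    (α x : (ι → R) × R) :
    skewTrace σ (potential σ a b (affineShift σ a b α x)) =
      skewTrace σ (potential σ a b x) + skewTrace σ (potential σ a b α) := by
  simp only [potential, affineShift, map_add, map_sum, skewTrace_coordTerm_add hσ,
    Finset.sum_add_distrib, Finset.sum_sub_distrib]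
  ring

end Ring

section Field

variable {F : Type*} [Field F] {q m : ℕ}

theorem F0_eq_skewTrace_potential {σ : F →+* F} (hσ : Involutive σ) (hq : ∀ x, σ x = x ^ q)
    (a b : F) (x : (Fin m → F) × F) :
    F0 q a b x = skewTrace σ (potential σ a b x) := by
  simp only [potential, map_add, map_sum, skewTrace_coordTerm hσ]
  simp only [F0, skewTrace_apply, hq, pow_succ, pow_mul', pow_zero, one_mul]

theorem F0_affineShift {σ : F →+* F} (hσ : Involutive σ) (hq : ∀ x, σ x = x ^ q)
    (a b : F) (α x : (Fin m → F) × F) :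
    F0 q a b (affineShift σ a b α x) = F0 q a b x + F0 q a b α := by
  simp only [F0_eq_skewTrace_potential hσ hq, skewTrace_potential_affineShift hσ]

theorem F0_eq_zero_iff (a b : F) (x : (Fin m → F) × F) :
    F0 q a b x = 0 ↔
      x.2 ^ q - x.2 + a ^ q * (∑ i, x.1 i ^ (2 * q)) - a * (∑ i, x.1 i ^ 2) =
        (b ^ q - b) * ∑ i, x.1 i ^ (q + 1) := by
  rw [← sub_eq_zero (b := _ * _), F0]
  simp only [Finset.sum_sub_distrib, ← Finset.mul_sum, add_sub_assoc]

theorem exists_ringHom_eq_pow [Fintype F] {k : ℕ} (hk : k ≠ 0) (hF : Fintype.card F = q ^ k) :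
    ∃ σ : F →+* F, ∀ x, σ x = x ^ q := by
  have hq : IsPrimePow q := (isPrimePow_pow_iff hk).mp (hF ▸ FiniteField.isPrimePow_card F)
  obtain ⟨p, r, hp, -, rfl⟩ := hq
  have : Fact p.Prime := ⟨hp.nat_prime⟩
  have : CharP F p := charP_of_card_eq_prime_pow (hF.trans (pow_mul p r k).symm)
  exact ⟨iterateFrobenius F p r, iterateFrobenius_def p r⟩

theorem exists_involutive_ringHom_eq_pow [Fintype F] (hF : Fintype.card F = q ^ 2) :
    ∃ σ : F →+* F, Involutive σ ∧ ∀ x, σ x = x ^ q := by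
  obtain ⟨σ, hq⟩ := exists_ringHom_eq_pow two_ne_zero hF
  refine ⟨σ, fun x => ?_, hq⟩
  rw [hq, hq, ← pow_mul, ← sq, ← hF, FiniteField.pow_card]

end Field

end BuekenhoutMetz

/-- The affine maps of the group `Ψ` preserve the form `F₀`, hence the affine
part of the BM quasi-Hermitian variety. -/
theorem stabilizer_preserves_variety (q : ℕ) (hq : IsPrimePow q)
    (F : Type*) [Field F] [Fintype F] (hF : Fintype.card F = q ^ 2)
    (a b : F) (ha : a ≠ 0) (hb : b ^ q ≠ b)
    (n : ℕ) (hn : 2 ≤ n) (α : Fin (n - 1) → F) (αn : F)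
    (hαn : αn ^ q - αn + a ^ q * (∑ i, α i ^ (2 * q)) - a * (∑ i, α i ^ 2)
        = (b ^ q - b) * ∑ i, α i ^ (q + 1)) :
    ∀ x : (Fin (n - 1) → F) × F,
      F0 q a b (fun i => x.1 i + α i,
        x.2 + (∑ i, ((b - b ^ q) * α i ^ q - 2 * a * α i) * x.1 i) + αn)
      = F0 q a b x := by
  intro x
  obtain ⟨σ, hσ, hσq⟩ := BuekenhoutMetz.exists_involutive_ringHom_eq_pow hF
  have hα : F0 q a b (α, αn) = 0 := (BuekenhoutMetz.F0_eq_zero_iff a b (α, αn)).mpr hαn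
  have shift := BuekenhoutMetz.F0_affineShift hσ hσq a b (α, αn) x
  rw [hα, add_zero] at shift
  simpa only [BuekenhoutMetz.affineShift, BuekenhoutMetz.shiftCoeff, hσq] using shift
end

section
/- Let n ≥ 2 and let P, P' ∈ F^n with F₀(P) = 0 and F₀(P') = 0. Then there is a unique tuple (α₁,…,α_n) ∈ F^n satisfying α_n^q − α_n + a^q(α₁^{2q}+…+α_{n−1}^{2q}) − a(α₁²+…+α_{n−1}²) = (b^q − b)(α₁^{q+1}+…+α_{n−1}^{q+1}) such that the affine map g(x₁,…,x_n) = (x₁+α₁, …, x_{n−1}+α_{n−1}, x_n + β₁x₁ + … + β_{n−1}x_{n−1} + α_n), with β_i = (b − b^q)α_i^q − 2aα_i, maps P to P'. In other words, the stabilizer Ψ of B_{a,b} (a group of order q^{2n−1}) acts sharply transitively on the affine points of B_{a,b}. -/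
/-!
Write `σ x = x ^ q`, an involutive automorphism of `F` with fixed field `K`, and put
`h(x) = x_n + ∑ (a x_i² - b x_i σ(x_i))`. Since the norms `x_i σ(x_i)` lie in `K`, we have
`F₀ = σ ∘ h - h`, so the affine points of `B_{a,b}` are those where `h` takes values in `K`. The
condition on `(α₁, …, α_n)` says in the same way that `h(α) ∈ K`.

Let `g_α` be the affine map attached to `α`. The cross terms of `h (g_α x) - h x - h α` collapse to
minus the trace of `∑ b α_i σ(x_i)`, which lies in `K`. Hence `h` is additive modulo `K`, and if
`x` is an affine point of `B_{a,b}` then `g_α x` is one exactly when `α` is. As `α ↦ g_α P` is a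
bijection of `F^n` for every `P`, sharp transitivity follows.
-/

open Function

section Involution

variable {R ι : Type*} [CommRing R] [Fintype ι] {σ : R →+* R}

/-- The height `h`, for which `F₀ = σ ∘ h - h` when `σ` is `x ↦ x ^ q`. As for `F0`, the last
coordinate is kept apart, as the second component. -/
def height (σ : R →+* R) (a b : R) (x : (ι → R) × R) : R :=
  x.2 + ∑ i, (a * x.1 i ^ 2 - b * (x.1 i * σ (x.1 i)))

/-- The affine points of the variety `B_{a,b}` attached to an involution `σ`: those whose height is
fixed by `σ`. -/
def affinePoints (σ : R →+* R) (a b : R) : Set ((ι → R) × R) :=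
  {x | IsFixedPt σ (height σ a b x)}

/-- The affine map `g_α`: translation by `α` combined with the shear of the last coordinate that has
coefficients `β_i = (b - σ b) σ(α_i) - 2 a α_i`. -/
def shearTranslate (σ : R →+* R) (a b : R) (α x : (ι → R) × R) : (ι → R) × R :=
  (fun i => x.1 i + α.1 i,
    x.2 + ∑ i, ((b - σ b) * σ (α.1 i) - 2 * a * α.1 i) * x.1 i + α.2)

theorem mem_affinePoints_iff_sub_eq_zero {a b : R} {x : (ι → R) × R} :
    x ∈ affinePoints σ a b ↔ σ (height σ a b x) - height σ a b x = 0 :=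
  sub_eq_zero.symm

theorem map_height_sub_height (hσ : Involutive σ) (a b : R) (x : (ι → R) × R) :
    σ (height σ a b x) - height σ a b x =
      σ x.2 - x.2 + ∑ i, (σ a * σ (x.1 i) ^ 2 - a * x.1 i ^ 2
        - (σ b - b) * (σ (x.1 i) * x.1 i)) := by
  simp only [height, map_add, map_sum, map_sub, map_mul, map_pow, hσ _, add_sub_add_comm,
    ← Finset.sum_sub_distrib]
  congr! 2
  ring

theorem height_shearTranslate (σ : R →+* R) (a b : R) (α x : (ι → R) × R) :
    height σ a b (shearTranslate σ a b α x) =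
      height σ a b x + height σ a b α
        - ∑ i, (b * α.1 i * σ (x.1 i) + σ b * σ (α.1 i) * x.1 i) := by
  have cross_terms :
      ∑ i, ((b - σ b) * σ (α.1 i) - 2 * a * α.1 i) * x.1 i
          + ∑ i, (a * (x.1 i + α.1 i) ^ 2 - b * ((x.1 i + α.1 i) * σ (x.1 i + α.1 i))) =
        ∑ i, (a * x.1 i ^ 2 - b * (x.1 i * σ (x.1 i)))
          + ∑ i, (a * α.1 i ^ 2 - b * (α.1 i * σ (α.1 i)))
          - ∑ i, (b * α.1 i * σ (x.1 i) + σ b * σ (α.1 i) * x.1 i) := by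
    simp only [← Finset.sum_add_distrib, ← Finset.sum_sub_distrib, map_add]
    congr! 1
    ring
  simp only [height, shearTranslate]
  linear_combination cross_terms

theorem map_height_shearTranslate_sub (hσ : Involutive σ) (a b : R) (α x : (ι → R) × R) :
    σ (height σ a b (shearTranslate σ a b α x)) - height σ a b (shearTranslate σ a b α x) =
      (σ (height σ a b x) - height σ a b x) + (σ (height σ a b α) - height σ a b α) := by
  have trace_fixed :
      σ (∑ i, (b * α.1 i * σ (x.1 i) + σ b * σ (α.1 i) * x.1 i)) =
        ∑ i, (b * α.1 i * σ (x.1 i) + σ b * σ (α.1 i) * x.1 i) := by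
    simp only [map_sum, map_add, map_mul, hσ _, add_comm]
  rw [height_shearTranslate, map_sub, map_add, trace_fixed]
  ring

theorem shearTranslate_mem_affinePoints_iff (hσ : Involutive σ) {a b : R} {α x : (ι → R) × R}
    (hx : x ∈ affinePoints σ a b) :
    shearTranslate σ a b α x ∈ affinePoints σ a b ↔ α ∈ affinePoints σ a b := by
  rw [mem_affinePoints_iff_sub_eq_zero] at hx
  rw [mem_affinePoints_iff_sub_eq_zero, map_height_shearTranslate_sub hσ, hx, zero_add,
    mem_affinePoints_iff_sub_eq_zero]

theorem bijective_shearTranslate_left (σ : R →+* R) (a b : R) (x : (ι → R) × R) :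
    Bijective fun α => shearTranslate σ a b α x := by
  refine ⟨fun ⟨α, s⟩ ⟨α', s'⟩ h => ?_, fun y => ?_⟩
  · obtain ⟨h₁, h₂⟩ := Prod.ext_iff.1 h
    obtain rfl : α = α' := funext fun i => add_left_cancel (congrFun h₁ i)
    exact Prod.ext rfl (add_left_cancel h₂)
  · let α : ι → R := y.1 - x.1
    refine ⟨(α, y.2 - (x.2 + ∑ i, ((b - σ b) * σ (α i) - 2 * a * α i) * x.1 i)), ?_⟩
    exact Prod.ext (add_sub_cancel x.1 y.1) (add_sub_cancel _ y.2)

theorem sharply_transitive_general (hσ : Involutive σ) {a b : R} {P P' : (ι → R) × R}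
    (hP : P ∈ affinePoints σ a b) (hP' : P' ∈ affinePoints σ a b) :
    ∃! α, α ∈ affinePoints σ a b ∧ shearTranslate σ a b α P = P' := by
  obtain ⟨α, hα, unique⟩ := (bijective_shearTranslate_left σ a b P).existsUnique P'
  exact ⟨α, ⟨(shearTranslate_mem_affinePoints_iff hσ hP).1 (hα ▸ hP'), hα⟩,
    fun α' h => unique α' h.2⟩

end Involution

section FiniteField

variable {F : Type*} [Field F]

theorem exists_ringHom_eq_pow_of_dvd_card [Fintype F] {q : ℕ} (hq : q ∣ Fintype.card F) :
    ∃ σ : F →+* F, ∀ x, σ x = x ^ q := by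
  obtain ⟨p, _⟩ := CharP.exists F
  obtain ⟨n, hp, hcard⟩ := FiniteField.card F p
  obtain ⟨k, -, rfl⟩ := (Nat.dvd_prime_pow hp).1 (hcard ▸ hq)
  have : Fact p.Prime := ⟨hp⟩
  exact ⟨iterateFrobenius F p k, iterateFrobenius_def p k⟩

theorem involutive_of_eq_pow_of_card_eq_sq [Fintype F] {q : ℕ} (hF : Fintype.card F = q ^ 2)
    {σ : F → F} (hσ : ∀ x, σ x = x ^ q) : Involutive σ := fun x => by
  rw [hσ, hσ, ← pow_mul, ← sq, ← hF, FiniteField.pow_card]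

theorem F0_eq_zero_iff_mem_affinePoints {q m : ℕ} {σ : F →+* F} (hσ : ∀ x, σ x = x ^ q)
    (hinv : Involutive σ) {a b : F} {x : (Fin m → F) × F} :
    F0 q a b x = 0 ↔ x ∈ affinePoints σ a b := by
  rw [mem_affinePoints_iff_sub_eq_zero, map_height_sub_height hinv]
  simp only [F0, hσ, pow_mul', pow_succ _ q]

theorem F0_eq_zero_iff {q m : ℕ} {a b : F} {x : (Fin m → F) × F} :
    F0 q a b x = 0 ↔
      x.2 ^ q - x.2 + a ^ q * (∑ i, x.1 i ^ (2 * q)) - a * (∑ i, x.1 i ^ 2) =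
        (b ^ q - b) * ∑ i, x.1 i ^ (q + 1) := by
  rw [F0, Finset.sum_sub_distrib, Finset.sum_sub_distrib, ← Finset.mul_sum, ← Finset.mul_sum,
    ← Finset.mul_sum, ← add_sub_assoc, ← add_sub_assoc, sub_eq_zero]

end FiniteField

/-- The stabilizer `Ψ` acts sharply transitively on the affine points of
`B_{a,b}`: for any two affine points `P, P'` of the variety there is a unique
tuple `(α₁,…,α_n)` satisfying the `Ψ`-condition whose associated affine map
sends `P` to `P'`. -/
theorem sharply_transitive (q : ℕ) (hq : IsPrimePow q)
    (F : Type*) [Field F] [Fintype F] (hF : Fintype.card F = q ^ 2)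
    (a b : F) (ha : a ≠ 0) (hb : b ^ q ≠ b)
    (n : ℕ) (hn : 2 ≤ n) (P P' : (Fin (n - 1) → F) × F)
    (hP : F0 q a b P = 0) (hP' : F0 q a b P' = 0) :
    ∃! αp : (Fin (n - 1) → F) × F,
      (αp.2 ^ q - αp.2 + a ^ q * (∑ i, αp.1 i ^ (2 * q)) - a * (∑ i, αp.1 i ^ 2)
          = (b ^ q - b) * ∑ i, αp.1 i ^ (q + 1)) ∧
      (fun i => P.1 i + αp.1 i) = P'.1 ∧
      P.2 + (∑ i, ((b - b ^ q) * αp.1 i ^ q - 2 * a * αp.1 i) * P.1 i) + αp.2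
        = P'.2 := by
  obtain ⟨σ, hσ⟩ := exists_ringHom_eq_pow_of_dvd_card (hF ▸ dvd_pow_self q two_ne_zero)
  have hinv : Involutive σ := involutive_of_eq_pow_of_card_eq_sq hF hσ
  rw [F0_eq_zero_iff_mem_affinePoints hσ hinv] at hP hP'
  simpa only [← F0_eq_zero_iff_mem_affinePoints hσ hinv, F0_eq_zero_iff, shearTranslate,
    Prod.ext_iff, hσ] using sharply_transitive_general hinv hP hP'
end

section
/- Let ε ∈ F \ K, and for j = 1,…,5 let u_j = u_{j,0} + ε u_{j,1} and v_j = v_{j,0} + ε v_{j,1} with u_{j,0}, u_{j,1}, v_{j,0}, v_{j,1} ∈ K. Then the 5×5 matrix over F with rows (1, u_j, v_j, u_j^q, v_j^q) has nonzero determinant if and only if the 5×5 matrix over K with rows (1, u_{j,0}, v_{j,0}, u_{j,1}, v_{j,1}) has nonzero determinant. (Thus condition (luc1) is equivalent to the five coordinate vectors forming an arc-type configuration in AG(4,q).) -/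
/-!
With `u = u₀ + ε u₁` and `σ` the `q`-th power map, which fixes `u₀` and `u₁`, the columns `(u, σ u)`
arise from the columns `(u₀, u₁)` by right multiplication with `!![1, 1; ε, σ ε]`, whose determinant
`σ ε - ε` is nonzero. Doing this for all coordinate functions at once multiplies the determinant by
a power of `σ ε - ε`.
-/

open Matrix

section ConjugateColumns

variable {R m κ ι : Type*} [CommRing R]

theorem map_add_smul_of_map_eq (σ : R →+* R) (ε : R) {X₀ X₁ : Matrix m ι R}
    (hX₀ : X₀.map σ = X₀) (hX₁ : X₁.map σ = X₁) :
    (X₀ + ε • X₁).map σ = X₀ + σ ε • X₁ := by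
  rw [Matrix.map_add σ (map_add σ), Matrix.map_smulₛₗ σ σ ε (map_mul σ ε), hX₀, hX₁]

variable [Fintype κ] [DecidableEq κ] [Fintype ι] [DecidableEq ι]

theorem det_fromCols_mul {μ : Type*} [Fintype μ] [DecidableEq μ] (A : Matrix (κ ⊕ μ) κ R)
    (X : Matrix (κ ⊕ μ) μ R) (T : Matrix μ μ R) :
    (fromCols A (X * T)).det = (fromCols A X).det * T.det := by
  have hfactor : fromCols A (X * T) = fromCols A X * fromBlocks 1 0 0 T := by
    simp only [fromCols_mul_fromBlocks, Matrix.mul_one, Matrix.mul_zero, add_zero, zero_add]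
  rw [hfactor, det_mul, det_fromBlocks_zero₂₁, det_one, one_mul]

/-- The Kronecker product `!![1, 1; a, b] ⊗ 1`, written in blocks: the matrix of the column
operations `(X₀, X₁) ↦ (X₀ + a X₁, X₀ + b X₁)`. -/
def pairTransition (ι : Type*) [DecidableEq ι] (a b : R) : Matrix (ι ⊕ ι) (ι ⊕ ι) R :=
  fromBlocks 1 1 (a • 1) (b • 1)

theorem fromCols_mul_pairTransition (X₀ X₁ : Matrix m ι R) (a b : R) :
    fromCols X₀ X₁ * pairTransition ι a b = fromCols (X₀ + a • X₁) (X₀ + b • X₁) := by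
  simp only [pairTransition, fromCols_mul_fromBlocks, Matrix.mul_one, Matrix.mul_smul]

theorem det_pairTransition (a b : R) : (pairTransition ι a b).det = (b - a) ^ Fintype.card ι := by
  rw [pairTransition, det_fromBlocks_one₁₁, Matrix.mul_one, ← sub_smul, det_smul, det_one, mul_one]

theorem det_fromCols_add_smul_add_smul (A : Matrix (κ ⊕ ι ⊕ ι) κ R)
    (X₀ X₁ : Matrix (κ ⊕ ι ⊕ ι) ι R) (a b : R) :
    (fromCols A (fromCols (X₀ + a • X₁) (X₀ + b • X₁))).det =
      (fromCols A (fromCols X₀ X₁)).det * (b - a) ^ Fintype.card ι := by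
  rw [← fromCols_mul_pairTransition, det_fromCols_mul, det_pairTransition]

theorem det_fromCols_map_add_smul_ne_zero_iff [NoZeroDivisors R] (σ : R →+* R) {ε : R}
    (hε : σ ε ≠ ε) (A : Matrix (κ ⊕ ι ⊕ ι) κ R) {X₀ X₁ : Matrix (κ ⊕ ι ⊕ ι) ι R}
    (hX₀ : X₀.map σ = X₀) (hX₁ : X₁.map σ = X₁) :
    (fromCols A (fromCols (X₀ + ε • X₁) ((X₀ + ε • X₁).map σ))).det ≠ 0 ↔
      (fromCols A (fromCols X₀ X₁)).det ≠ 0 := by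
  have hfactor : (σ ε - ε) ^ Fintype.card ι ≠ 0 := pow_ne_zero _ (sub_ne_zero.2 hε)
  rw [map_add_smul_of_map_eq σ ε hX₀ hX₁, det_fromCols_add_smul_add_smul, mul_ne_zero_iff,
    and_iff_left hfactor]

end ConjugateColumns

/-- The partition of five columns into blocks of sizes `1`, `2` and `2`, in this order. -/
def finFiveEquivSum : Fin 5 ≃ Fin 1 ⊕ Fin 2 ⊕ Fin 2 :=
  (finSumFinEquiv (m := 1) (n := 4)).symm.trans
    (Equiv.sumCongr (Equiv.refl _) (finSumFinEquiv (m := 2) (n := 2)).symm)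

theorem det_fromCols_finFiveEquivSum {R : Type*} [CommRing R]
    (A : Matrix (Fin 1 ⊕ Fin 2 ⊕ Fin 2) (Fin 1) R)
    (X Y : Matrix (Fin 1 ⊕ Fin 2 ⊕ Fin 2) (Fin 2) R) :
    (fromCols A (fromCols X Y)).det =
      (of fun j : Fin 5 => ![A (finFiveEquivSum j) 0, X (finFiveEquivSum j) 0,
        X (finFiveEquivSum j) 1, Y (finFiveEquivSum j) 0, Y (finFiveEquivSum j) 1]).det := by
  rw [← det_submatrix_equiv_self finFiveEquivSum]
  congr 1
  ext j k
  fin_cases k <;> rfl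

theorem luc1_equiv_arc_general {R : Type*} [CommRing R] [NoZeroDivisors R] (σ : R →+* R) {ε : R}
    (hε : σ ε ≠ ε) {u₀ u₁ v₀ v₁ : Fin 5 → R}
    (hu₀ : ∀ j, σ (u₀ j) = u₀ j) (hu₁ : ∀ j, σ (u₁ j) = u₁ j)
    (hv₀ : ∀ j, σ (v₀ j) = v₀ j) (hv₁ : ∀ j, σ (v₁ j) = v₁ j) :
    (of fun j => ![1, u₀ j + ε * u₁ j, v₀ j + ε * v₁ j,
        σ (u₀ j + ε * u₁ j), σ (v₀ j + ε * v₁ j)]).det ≠ 0 ↔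
      (of fun j => ![1, u₀ j, v₀ j, u₁ j, v₁ j]).det ≠ 0 := by
  let cols (a b : Fin 5 → R) : Matrix (Fin 1 ⊕ Fin 2 ⊕ Fin 2) (Fin 2) R :=
    of fun j => ![a (finFiveEquivSum.symm j), b (finFiveEquivSum.symm j)]
  have map_cols {a b : Fin 5 → R} (ha : ∀ j, σ (a j) = a j) (hb : ∀ j, σ (b j) = b j) :
      (cols a b).map σ = cols a b := by
    ext j k
    fin_cases k
    · exact ha _
    · exact hb _
  simpa [det_fromCols_finFiveEquivSum, cols] using det_fromCols_map_add_smul_ne_zero_iff σ hε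
    (of fun _ _ => 1) (map_cols hu₀ hv₀) (map_cols hu₁ hv₁)

theorem exists_ringHom_forall_eq_pow {R : Type*} [CommRing R] [IsDomain R] [Fintype R] {q n : ℕ}
    (hq : IsPrimePow q) (hR : Fintype.card R = q ^ n) : ∃ σ : R →+* R, ∀ x, σ x = x ^ q := by
  obtain ⟨p, k, hp, -, rfl⟩ := hq
  have : Fact p.Prime := ⟨hp.nat_prime⟩
  have : CharP R p := charP_of_card_eq_prime_pow (hR.trans (pow_mul p k n).symm)
  exact ⟨iterateFrobenius R p k, iterateFrobenius_def p k⟩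

/-- Writing `u_j = u_{j,0} + ε u_{j,1}`, `v_j = v_{j,0} + ε v_{j,1}` in the basis
`(1, ε)` of `F` over `K`, the matrix with rows `(1, u_j, v_j, u_j^q, v_j^q)` is
nonsingular iff the matrix with rows `(1, u_{j,0}, v_{j,0}, u_{j,1}, v_{j,1})`
is nonsingular. -/
theorem luc1_equiv_arc (q : ℕ) (hq : IsPrimePow q)
    (F : Type*) [Field F] [Fintype F] (hF : Fintype.card F = q ^ 2)
    (ε : F) (hε : ε ^ q ≠ ε)
    (u0 u1 v0 v1 : Fin 5 → F)
    (hu0 : ∀ j, (u0 j) ^ q = u0 j) (hu1 : ∀ j, (u1 j) ^ q = u1 j)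
    (hv0 : ∀ j, (v0 j) ^ q = v0 j) (hv1 : ∀ j, (v1 j) ^ q = v1 j) :
    (Matrix.of (fun j : Fin 5 =>
      ![(1 : F), u0 j + ε * u1 j, v0 j + ε * v1 j,
        (u0 j + ε * u1 j) ^ q, (v0 j + ε * v1 j) ^ q])).det ≠ 0 ↔
    (Matrix.of (fun j : Fin 5 =>
      ![(1 : F), u0 j, v0 j, u1 j, v1 j])).det ≠ 0 := by
  obtain ⟨σ, hσ⟩ := exists_ringHom_forall_eq_pow hq hF
  simp only [← hσ] at hε hu0 hu1 hv0 hv1 ⊢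
  exact luc1_equiv_arc_general σ hε hu0 hu1 hv0 hv1
end

section
/- Let n = 3, let λ ∈ K and (x,y,z) ∈ W = F² × C. Then there exists z' ∈ C such that for every ω = (ω₁,ω₂) ∈ F² one has λ·F_ω(x,y,z) = F_ω(λx, λy, z'). In particular the code {(F_ω(P))_{ω} : P ∈ W} is closed under scalar multiplication by elements of K, and hence is K-linear. -/
/-- The affine form `F_ω` (case `n = 3`) associated to `ω = (ω₁, ω₂) ∈ F²`. -/
def Fw {F : Type*} [Field F] (q : ℕ) (a b ω₁ ω₂ x y z : F) : F :=
  z ^ q - z + a ^ q * (x ^ (2 * q) + y ^ (2 * q)) - a * (x ^ 2 + y ^ 2)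
    - (b ^ q - b) * (x ^ (q + 1) + y ^ (q + 1))
    + (2 * a ^ q * ω₁ ^ q - (b ^ q - b) * ω₁) * x ^ q
    + (2 * a ^ q * ω₂ ^ q - (b ^ q - b) * ω₂) * y ^ q
    - (2 * a * ω₁ + (b ^ q - b) * ω₁ ^ q) * x
    - (2 * a * ω₂ + (b ^ q - b) * ω₂ ^ q) * y

/-!
Write `T u = u ^ q - u`, which is `K`-linear with kernel `K`, and let `Q` be the `K`-quadratic form
`Q (x, y) = a (x² + y²) - b (x ^ (q + 1) + y ^ (q + 1))` on `F²`. Norms and traces from `F` lie in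
`K`, so `F_ω (v, z) = T (z + Q v + polar Q ω v)`. Replacing `v` by `λ v` multiplies the polar term
by `λ` and `Q v` by `λ²`; the discrepancy `(λ - λ²) Q v` does not involve `ω`, so a change of `z`,
made modulo `K`, absorbs it for all `ω` at once.
-/

open QuadraticMap (polar linMulLin)

section QuadraticMap

variable {K M N P : Type*} [CommRing K] [AddCommGroup M] [AddCommGroup N] [AddCommGroup P]
  [Module K M] [Module K N] [Module K P]

theorem smul_map_add_polar_eq_iff (T : N →ₗ[K] P) (Q : QuadraticMap K M N) (k : K) (ω v : M)
    (z z' : N) :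
    k • T (z + Q v + polar Q ω v) = T (z' + Q (k • v) + polar Q ω (k • v)) ↔
      z' - (k • z + (k - k ^ 2) • Q v) ∈ LinearMap.ker T := by
  have h : z' + Q (k • v) + polar Q ω (k • v) - k • (z + Q v + polar Q ω v) =
      z' - (k • z + (k - k ^ 2) • Q v) := by
    rw [Q.map_smul, QuadraticMap.polar_smul_right]
    module
  rw [← map_smul, eq_comm, ← LinearMap.sub_mem_ker_iff, h]

theorem exists_mem_smul_map_add_polar_eq {T : N →ₗ[K] P} {C : Set N}
    (hC : ∀ u, ∃ c ∈ C, c - u ∈ LinearMap.ker T) (Q : QuadraticMap K M N) (k : K) (v : M) (z : N) :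
    ∃ z' ∈ C, ∀ ω,
      k • T (z + Q v + polar Q ω v) = T (z' + Q (k • v) + polar Q ω (k • v)) := by
  obtain ⟨z', hz'C, hz'⟩ := hC (k • z + (k - k ^ 2) • Q v)
  exact ⟨z', hz'C, fun ω ↦ (smul_map_add_polar_eq_iff T Q k ω v z z').2 hz'⟩

end QuadraticMap

section AlgHom

variable {K R : Type*} [CommRing K] [CommRing R] [Algebra K R]

/-- The map `u ↦ σ u - u` attached to an endomorphism `σ`; it is the Artin–Schreier map
`u ↦ u ^ q - u` when `σ` is the `q`-power Frobenius. -/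
def artinSchreier (σ : R →ₐ[K] R) : R →ₗ[K] R :=
  σ.toLinearMap - LinearMap.id

theorem artinSchreier_apply (σ : R →ₐ[K] R) (u : R) : artinSchreier σ u = σ u - u :=
  rfl

theorem mem_ker_artinSchreier {σ : R →ₐ[K] R} {u : R} :
    u ∈ LinearMap.ker (artinSchreier σ) ↔ σ u = u := by
  rw [LinearMap.mem_ker, artinSchreier_apply, sub_eq_zero]

/-- The quadratic form `x ↦ a x² - b x σ(x)`, which combines the square with the norm `x σ(x)`
of an involution `σ`. -/
def sqSubNormForm (σ : R →ₐ[K] R) (a b : R) : QuadraticMap K R R :=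
  a • QuadraticMap.sq - b • linMulLin LinearMap.id σ.toLinearMap

theorem sqSubNormForm_apply (σ : R →ₐ[K] R) (a b x : R) :
    sqSubNormForm σ a b x = a * x ^ 2 - b * (x * σ x) := by
  simp [sqSubNormForm, sq]

theorem polar_sqSubNormForm (σ : R →ₐ[K] R) (a b ω x : R) :
    polar (sqSubNormForm σ a b) ω x = 2 * a * ω * x - b * (ω * σ x + x * σ ω) := by
  simp only [polar, sqSubNormForm_apply, map_add]
  ring

end AlgHom

section FiniteField

variable {F : Type*} [Field F]

theorem exists_algHom_eq_pow [Fintype F] {q m : ℕ} (hq : IsPrimePow q)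
    (hF : Fintype.card F = q ^ m) :
    ∃ (K : Subring F) (σ : F →ₐ[K] F), (∀ u, σ u = u ^ q) ∧ ∀ u, u ∈ K ↔ u ^ q = u := by
  obtain ⟨p, k, hp, -, rfl⟩ := hq
  have : Fact p.Prime := ⟨hp.nat_prime⟩
  have : CharP F p := charP_of_card_eq_prime_pow (hF.trans (pow_mul p k m).symm)
  let φ := iterateFrobenius F p k
  exact ⟨φ.eqLocus (RingHom.id F), { φ with commutes' := Subtype.property },
    fun _ ↦ rfl, fun _ ↦ Iff.rfl⟩

theorem Fw_eq_artinSchreier {K : Type*} [CommRing K] [Algebra K F] {σ : F →ₐ[K] F} {q : ℕ}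
    (hσ : ∀ u, σ u = u ^ q) (hinv : Function.Involutive σ) (a b z : F) (ω v : F × F) :
    Fw q a b ω.1 ω.2 v.1 v.2 z =
      let Q := (sqSubNormForm σ a b).prod (sqSubNormForm σ a b)
      artinSchreier σ (z + Q v + polar Q ω v) := by
  simp only [Fw, mul_comm 2 q, pow_mul, pow_succ _ q, ← hσ, artinSchreier_apply,
    QuadraticMap.prod_apply, QuadraticMap.polar_prod, sqSubNormForm_apply, polar_sqSubNormForm,
    map_add, map_sub, map_mul, map_pow, map_ofNat, hinv _]
  ring

end FiniteField

/-- `K`-homogeneity of the evaluation code: for `λ ∈ K` and a point of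
`W = F² × C`, the scalar multiple `λ·F_ω(x,y,z)` is the value of `F_ω` at
another point of `W`, simultaneously for all `ω`; hence the code is K-linear. -/
theorem code_closed_under_scalars (q : ℕ) (hq : IsPrimePow q)
    (F : Type*) [Field F] [Fintype F] (hF : Fintype.card F = q ^ 2)
    (a b : F) (ha : a ≠ 0) (hb : b ^ q ≠ b)
    (C : Finset F) (hC : ∀ x : F, ∃! c : F, c ∈ C ∧ (c - x) ^ q = c - x)
    (lam : F) (hlam : lam ^ q = lam)
    (x y z : F) (hz : z ∈ C) :
    ∃ z' ∈ C, ∀ ω₁ ω₂ : F,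
      lam * Fw q a b ω₁ ω₂ x y z = Fw q a b ω₁ ω₂ (lam * x) (lam * y) z' := by
  obtain ⟨K, σ, hσ, hK⟩ := exists_algHom_eq_pow hq hF
  have hinv : Function.Involutive σ := fun u ↦ by
    rw [hσ, hσ, ← pow_mul, ← sq, ← hF, FiniteField.pow_card]
  have hcosets : ∀ u, ∃ c ∈ (C : Set F), c - u ∈ LinearMap.ker (artinSchreier σ) := fun u ↦ by
    simpa only [Finset.mem_coe, mem_ker_artinSchreier, hσ] using (hC u).exists
  let Q := (sqSubNormForm σ a b).prod (sqSubNormForm σ a b)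
  let k : K := ⟨lam, (hK lam).2 hlam⟩
  obtain ⟨z', hz'C, hz'⟩ := exists_mem_smul_map_add_polar_eq hcosets Q k (x, y) z
  refine ⟨z', hz'C, fun ω₁ ω₂ ↦ ?_⟩
  calc lam * Fw q a b ω₁ ω₂ x y z
      = k • artinSchreier σ (z + Q (x, y) + polar Q (ω₁, ω₂) (x, y)) :=
        congrArg (lam * ·) (Fw_eq_artinSchreier hσ hinv a b z (ω₁, ω₂) (x, y))
    _ = artinSchreier σ (z' + Q (k • (x, y)) + polar Q (ω₁, ω₂) (k • (x, y))) := hz' (ω₁, ω₂)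
    _ = Fw q a b ω₁ ω₂ (lam * x) (lam * y) z' :=
        (Fw_eq_artinSchreier hσ hinv a b z' (ω₁, ω₂) (k • (x, y))).symm
end

section
/- Suppose q > 4 and 0 ∈ C. Let t₁,…,t₅ be five pairwise distinct elements of K and set ω_j = (t_j + εt_j², t_j³ + εt_j⁴) for j = 1,…,5. Then the only point (x,y,z) ∈ W = F² × C satisfying F_{ω_j}(x,y,z) = 0 for all j = 1,…,5 is (x,y,z) = (0,0,0). In particular any five of the q varieties V(F_ω), ω ∈ Ω = {(t+εt², t³+εt⁴) : t ∈ K}, meet W in exactly one point. -/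
/-!
Writing `β = b ^ q - b`, the part of `F_ω` that depends on `ω` is `B(ω₁, x) + B(ω₂, y)`, where `B`
is the polar form of `u ↦ a ^ q u ^ (2q) - a u ^ 2 - β u ^ (q + 1)`. This `B` is linear over the
fixed field `K` of `u ↦ u ^ q`, so on the curve `ω = (t + ε t², t³ + ε t⁴)` with `t ∈ K` the value
`F_ω(x, y, z)` is a polynomial of degree at most four in `t`, with coefficients
`F_0(x, y, z)`, `B(1, x)`, `B(ε, x)`, `B(1, y)`, `B(ε, y)`. If it vanishes at five parameters, all
five coefficients are zero. Nondegeneracy of `B` then gives `x = y = 0`, whence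
`z ^ q - z = F_0(0, 0, z) = 0`, and `z` lies in the same coset of `K` as `0`.
-/

section TwistedPolar

variable {R : Type*} [CommRing R] (σ : R →+* R) (a β : R)

/-- The polar form of `u ↦ σ a * σ u ^ 2 - a * u ^ 2 - β * (u * σ u)`, grouped as the coefficients
of `ω` are grouped in `Fw`; the endomorphism `σ` stands for `u ↦ u ^ q`. -/
def twistedPolar (w x : R) : R :=
  (2 * σ a * σ w - β * w) * σ x - (2 * a * w + β * σ w) * x

theorem twistedPolar_add_left (v w x : R) :
    twistedPolar σ a β (v + w) x = twistedPolar σ a β v x + twistedPolar σ a β w x := by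
  simp only [twistedPolar, map_add]
  ring

variable {σ}

theorem twistedPolar_mul_left_of_fixed {s : R} (hs : σ s = s) (w x : R) :
    twistedPolar σ a β (w * s) x = twistedPolar σ a β w x * s := by
  simp only [twistedPolar, map_mul, hs]
  ring

theorem twistedPolar_add_mul_left_of_fixed {r s : R} (hr : σ r = r) (hs : σ s = s) (ε x : R) :
    twistedPolar σ a β (r + ε * s) x
      = twistedPolar σ a β 1 x * r + twistedPolar σ a β ε x * s := by
  rw [twistedPolar_add_left, twistedPolar_mul_left_of_fixed a β hs,
    ← twistedPolar_mul_left_of_fixed a β hr, one_mul]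

variable {a β}

theorem eq_zero_of_twistedPolar_eq_zero [NoZeroDivisors R] {ε x : R} (hε : σ ε ≠ ε)
    (hdisc : 4 * (σ a * a) + β ^ 2 ≠ 0) (h_one : twistedPolar σ a β 1 x = 0)
    (h_eps : twistedPolar σ a β ε x = 0) : x = 0 := by
  simp only [twistedPolar, map_one, mul_one] at h_one h_eps
  -- `B(w, x) = P * σ w - Q * w`, where `P` and `Q` do not depend on `w`.
  have hQ : β * σ x + 2 * a * x = 0 := by
    have : (σ ε - ε) * (β * σ x + 2 * a * x) = 0 := by
      linear_combination h_eps - σ ε * h_one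
    exact (mul_eq_zero.mp this).resolve_left (sub_ne_zero.mpr hε)
  have hP : 2 * σ a * σ x - β * x = 0 := by
    linear_combination h_one + hQ
  have : (4 * (σ a * a) + β ^ 2) * x = 0 := by
    linear_combination 2 * σ a * hQ - β * hP
  exact (mul_eq_zero.mp this).resolve_left hdisc

theorem eq_zero_of_add_twistedPolar_curve_eq_zero [IsDomain R] {ε c x y : R} (hε : σ ε ≠ ε)
    (hdisc : 4 * (σ a * a) + β ^ 2 ≠ 0) {t : Fin 5 → R} (ht : ∀ j, σ (t j) = t j)
    (ht_inj : Function.Injective t)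
    (h : ∀ j, c + twistedPolar σ a β (t j + ε * t j ^ 2) x
      + twistedPolar σ a β (t j ^ 3 + ε * t j ^ 4) y = 0) :
    c = 0 ∧ x = 0 ∧ y = 0 := by
  let coeff : Fin 5 → R := ![c, twistedPolar σ a β 1 x, twistedPolar σ a β ε x,
    twistedPolar σ a β 1 y, twistedPolar σ a β ε y]
  have ht_pow (j : Fin 5) (m : ℕ) : σ (t j ^ m) = t j ^ m := by rw [map_pow, ht]
  have hcoeff : coeff = 0 := by
    refine Matrix.eq_zero_of_forall_index_sum_pow_mul_eq_zero ht_inj fun j => ?_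
    have hj := h j
    rw [twistedPolar_add_mul_left_of_fixed a β (ht j) (ht_pow j 2),
      twistedPolar_add_mul_left_of_fixed a β (ht_pow j 3) (ht_pow j 4)] at hj
    rw [Fin.sum_univ_five]
    change t j ^ 0 * c + t j ^ 1 * twistedPolar σ a β 1 x + t j ^ 2 * twistedPolar σ a β ε x
      + t j ^ 3 * twistedPolar σ a β 1 y + t j ^ 4 * twistedPolar σ a β ε y = 0
    linear_combination hj
  exact ⟨congrFun hcoeff 0,
    eq_zero_of_twistedPolar_eq_zero hε hdisc (congrFun hcoeff 1) (congrFun hcoeff 2),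
    eq_zero_of_twistedPolar_eq_zero hε hdisc (congrFun hcoeff 3) (congrFun hcoeff 4)⟩

end TwistedPolar

section Fw

variable {F : Type*} [Field F]

theorem Fw_eq_add_twistedPolar (p k : ℕ) [ExpChar F p] (a b ω₁ ω₂ x y z : F) :
    Fw (p ^ k) a b ω₁ ω₂ x y z = Fw (p ^ k) a b 0 0 x y z
      + twistedPolar (iterateFrobenius F p k) a (b ^ p ^ k - b) ω₁ x
      + twistedPolar (iterateFrobenius F p k) a (b ^ p ^ k - b) ω₂ y := by
  have hq : p ^ k ≠ 0 := pow_ne_zero k (expChar_pos F p).ne'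
  simp only [Fw, twistedPolar, iterateFrobenius_def, zero_pow hq]
  ring

theorem Fw_zero_zero_zero_zero {q : ℕ} (hq : q ≠ 0) (a b z : F) :
    Fw q a b 0 0 0 0 z = z ^ q - z := by
  simp [Fw, hq]

theorem five_varieties_meet_in_one_point_general (p k : ℕ) [ExpChar F p] {a b : F}
    (hab : 4 * a ^ (p ^ k + 1) + (b ^ p ^ k - b) ^ 2 ≠ 0) {ε : F} (hε : ε ^ p ^ k ≠ ε)
    {C : Set F} (hC : ∀ x : F, ∃! c : F, c ∈ C ∧ (c - x) ^ p ^ k = c - x) (h0C : (0 : F) ∈ C)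
    {t : Fin 5 → F} (ht : ∀ j, t j ^ p ^ k = t j) (ht_inj : Function.Injective t)
    {x y z : F} (hz : z ∈ C)
    (hsol : ∀ j,
      Fw (p ^ k) a b (t j + ε * t j ^ 2) (t j ^ 3 + ε * t j ^ 4) x y z = 0) :
    x = 0 ∧ y = 0 ∧ z = 0 := by
  have hq : p ^ k ≠ 0 := pow_ne_zero k (expChar_pos F p).ne'
  obtain ⟨hF₀, rfl, rfl⟩ := eq_zero_of_add_twistedPolar_curve_eq_zero
    (σ := iterateFrobenius F p k) hε (by simpa only [iterateFrobenius_def, ← pow_succ] using hab)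
    ht ht_inj fun j => (Fw_eq_add_twistedPolar p k a b _ _ x y z).symm.trans (hsol j)
  rw [Fw_zero_zero_zero_zero hq, sub_eq_zero] at hF₀
  exact ⟨rfl, rfl, (hC 0).unique ⟨hz, by simpa only [sub_zero] using hF₀⟩
    ⟨h0C, by rw [sub_zero, zero_pow hq]⟩⟩

end Fw

/-- For `q > 4` and five distinct parameters `t₁,…,t₅ ∈ K` with
`ω_j = (t_j + εt_j², t_j³ + εt_j⁴)`, the only point of `W = F² × C` lying on all
five varieties `V(F_{ω_j})` is `(0,0,0)`: any five of the `q` varieties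
`V(F_ω)`, `ω ∈ Ω`, meet `W` in exactly one point. -/
theorem five_varieties_meet_in_one_point (q : ℕ) (hq : IsPrimePow q) (hq4 : 4 < q)
    (F : Type*) [Field F] [Fintype F] (hF : Fintype.card F = q ^ 2)
    (a b : F) (ha : a ≠ 0) (hb : b ^ q ≠ b)
    (hab : 4 * a ^ (q + 1) + (b ^ q - b) ^ 2 ≠ 0)
    (ε : F) (hε : ε ^ q ≠ ε)
    (C : Finset F) (hC : ∀ x : F, ∃! c : F, c ∈ C ∧ (c - x) ^ q = c - x)
    (h0C : (0 : F) ∈ C)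
    (t : Fin 5 → F) (ht : ∀ j, (t j) ^ q = t j) (htinj : Function.Injective t)
    (x y z : F) (hz : z ∈ C)
    (hsol : ∀ j : Fin 5,
      Fw q a b (t j + ε * t j ^ 2) (t j ^ 3 + ε * t j ^ 4) x y z = 0) :
    x = 0 ∧ y = 0 ∧ z = 0 := by
  obtain ⟨p, k, hp, -, rfl⟩ := hq
  have : Fact p.Prime := ⟨hp.nat_prime⟩
  have : CharP F p := charP_of_card_eq_prime_pow (hF.trans (pow_mul p k 2).symm)
  exact five_varieties_meet_in_one_point_general p k hab hε hC h0C ht htinj hz hsol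
end
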